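/- arXiv:math/0609455 — 2 statements merged into one kernel-verified Lean document; each statement's English description precedes it below -/
import Mathlib

section
/- Under the Hamiltonian flow setup, for every t, every (z,ζ), and every index i = 1, …, n, the following identity holds: ∂_{ζ_i} [ ∫_0^t ( a(z_r, ζ_r) − ζ_r · (d_ζ a)(z_r, ζ_r) ) dr ] + ζ_t · ∂_{ζ_i} z_t = 0, where (z_r, ζ_r) = χ_r(z,ζ) and the ζ_i-derivative is taken in the initial datum ζ. -/
open MeasureTheory Complex Real
open scoped ENNReal NNReal RealInnerProductSpace

noncomputable section

/-- Euclidean space `ℝ^n`. -/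
abbrev En (n : ℕ) := EuclideanSpace ℝ (Fin n)

/-- The `i`-th coordinate vector of `ℝ^n`. -/
def ev {n : ℕ} (i : Fin n) : En n := EuclideanSpace.single i (1 : ℝ)

/-- The Hamiltonian `a(z,ζ) = Σᵢⱼ aⁱʲ(z) ζᵢ ζⱼ` on phase space `ℝ^n × ℝ^n`. -/
def ham {n : ℕ} (a : Fin n → Fin n → En n → ℝ) (w : En n × En n) : ℝ :=
  ∑ i, ∑ j, a i j w.1 * w.2 i * w.2 j

/-- The Hamiltonian vector field `(d_ζ a, −d_z a)` of `ham a`. -/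
def hamField {n : ℕ} (a : Fin n → Fin n → En n → ℝ) (w : En n × En n) :
    En n × En n :=
  (gradient (fun ζ => ham a (w.1, ζ)) w.2, -gradient (fun z => ham a (z, w.2)) w.1)

/-- `χ` is the flow of Hamilton's equations `∂ₜ z = d_ζ a`, `∂ₜ ζ = −d_z a`
with `χ 0 = id`. -/
def IsHamFlow {n : ℕ} (a : Fin n → Fin n → En n → ℝ)
    (χ : ℝ → En n × En n → En n × En n) : Prop :=
  (∀ w, χ 0 w = w) ∧ ∀ w t, HasDerivAt (fun s => χ s w) (hamField a (χ t w)) t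

/-- The coefficient hypotheses of the Hamiltonian flow setup: `aⁱʲ` smooth symmetric,
`‖aⁱʲ − δᵢⱼ‖_{C²} ≤ 1`, and `|∂^α aⁱʲ| ≤ C_α μ^{max(0,|α|−2)/2}` for every order `|α|`. -/
def HamSetup {n : ℕ} (μ : ℝ) (Cα : ℕ → ℝ) (a : Fin n → Fin n → En n → ℝ) : Prop :=
  (∀ i j, ContDiff ℝ (⊤ : ℕ∞) (a i j)) ∧ (∀ i j, a i j = a j i) ∧
    (∀ i j x, |a i j x - (if i = j then (1 : ℝ) else 0)| + ‖fderiv ℝ (a i j) x‖ +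
      ‖iteratedFDeriv ℝ 2 (a i j) x‖ ≤ 1) ∧
    ∀ i j (k : ℕ) x, ‖iteratedFDeriv ℝ k (a i j) x‖ ≤
      Cα k * μ ^ (max 0 ((k : ℝ) - 2) / 2)

/-- The symbol `σ(z,ζ) = a(z,ζ) − ζ · (d_ζ a)(z,ζ)`. -/
def hamSigma {n : ℕ} (a : Fin n → Fin n → En n → ℝ) (w : En n × En n) : ℝ :=
  ham a w - ⟪w.2, gradient (fun ζ => ham a (w.1, ζ)) w.2⟫

/-!
Write `(z_t, ζ_t)` and `(z'_t, ζ'_t)` for the orbits of `w` and `w'`, and `σ = H - ζ · d_ζ H`. By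
Hamilton's equations the time derivative of
`∫₀ᵗ σ(z', ζ') - ∫₀ᵗ σ(z, ζ) + ⟪ζ_t, z'_t - z_t⟫` is the first-order Taylor remainder of `H` minus
`⟪ζ'_t - ζ_t, d_ζ H(z'_t, ζ'_t) - d_ζ H(z_t, ζ_t)⟫`, and by Grönwall's inequality both are
`o(‖w' - w‖)` uniformly on bounded times. Hence `w' ↦ ∫₀ᵗ σ + ⟪ζ_t, z'_t⟫` has derivative
`v ↦ ⟪ζ_0, v.1⟫` at `w`, which vanishes on variations of the initial momentum alone.

To differentiate the two summands separately one needs the flow to be differentiable in its initial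
datum. Replacing the field `F` by `c • F` rescales time, so it suffices to treat time `1` for a
field whose derivative along the orbit has norm at most `1 / 2`, where the variational equation is
solved by a single Picard–Lindelöf step, and to compose by the group law.
-/

section Compact

open Set Metric

variable {E G : Type*} [NormedAddCommGroup E] [NormedAddCommGroup G] {f : E → G} {s : Set E}

theorem exists_forall_norm_sub_le_of_isCompact (hs : IsCompact s) (hf : Continuous f) {ε : ℝ}
    (hε : 0 < ε) :
    ∃ δ > 0, ∀ x ∈ s, ∀ y, ‖y - x‖ < δ → ‖f y - f x‖ ≤ ε := by
  obtain ⟨δ, hδ, hball⟩ := Metric.mem_uniformity_dist.1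
    (hs.uniformContinuousAt_of_continuousAt f (fun _ _ => hf.continuousAt) (dist_mem_uniformity hε))
  refine ⟨δ, hδ, fun x hx y hy => ?_⟩
  rw [← dist_eq_norm'] at hy ⊢
  exact le_of_lt (hball hy hx)

variable [NormedSpace ℝ E] [NormedSpace ℝ G]

theorem exists_forall_norm_sub_sub_fderiv_le_of_isCompact (hs : IsCompact s)
    (hf : ContDiff ℝ 1 f) {ε : ℝ} (hε : 0 < ε) :
    ∃ δ > 0, ∀ x ∈ s, ∀ y, ‖y - x‖ < δ →
      ‖f y - f x - fderiv ℝ f x (y - x)‖ ≤ ε * ‖y - x‖ := by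
  obtain ⟨δ, hδ, hfderiv⟩ :=
    exists_forall_norm_sub_le_of_isCompact hs (hf.continuous_fderiv one_ne_zero) hε
  refine ⟨δ, hδ, fun x hx y hy => ?_⟩
  exact (convex_ball x δ).norm_image_sub_le_of_norm_fderiv_le' (𝕜 := ℝ)
    (fun _ _ => (hf.differentiable one_ne_zero).differentiableAt)
    (fun u hu => hfderiv x hx u (mem_ball_iff_norm.1 hu))
    (mem_ball_self hδ) (mem_ball_iff_norm.2 hy)

theorem exists_forall_norm_sub_le_mul_of_isCompact (hs : IsCompact s) (hf : ContDiff ℝ 1 f) :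
    ∃ K ≥ 0, ∃ δ > 0, ∀ x ∈ s, ∀ y, ‖y - x‖ < δ → ‖f y - f x‖ ≤ K * ‖y - x‖ := by
  obtain ⟨M, hM⟩ := hs.exists_bound_of_continuousOn (hf.continuous_fderiv one_ne_zero).continuousOn
  obtain ⟨δ, hδ, htaylor⟩ := exists_forall_norm_sub_sub_fderiv_le_of_isCompact hs hf one_pos
  refine ⟨1 + |M|, by positivity, δ, hδ, fun x hx y hy => ?_⟩
  calc ‖f y - f x‖ ≤ ‖f y - f x - fderiv ℝ f x (y - x)‖ + ‖fderiv ℝ f x (y - x)‖ :=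
        norm_le_norm_sub_add _ _
    _ ≤ 1 * ‖y - x‖ + |M| * ‖y - x‖ := by
        gcongr
        · exact htaylor x hx y hy
        · exact (fderiv ℝ f x).le_of_opNorm_le ((hM x hx).trans (le_abs_self M)) _
    _ = (1 + |M|) * ‖y - x‖ := by ring

end Compact

section IntegralCurve

open Set Filter Topology

variable {E : Type*} [NormedAddCommGroup E] [NormedSpace ℝ E]

-- The exponent `K + 1` makes the comparison function strictly steeper than `f` wherever the two
-- norms meet, so the fencing inequality asks for `bound` only inside the tube of radius `δ`.
theorem norm_le_norm_mul_exp_of_norm_deriv_le {f f' : ℝ → E} {K δ T : ℝ} (hK : 0 ≤ K)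
    (hf : ∀ t, HasDerivAt f (f' t) t)
    (bound : ∀ t ∈ Ico 0 T, ‖f t‖ < δ → ‖f' t‖ ≤ K * ‖f t‖)
    (hδ : ‖f 0‖ * Real.exp ((K + 1) * T) < δ) {r : ℝ} (hr : r ∈ Icc 0 T) :
    ‖f r‖ ≤ ‖f 0‖ * Real.exp ((K + 1) * r) := by
  have fence : ∀ m, ‖f 0‖ < m → m * Real.exp ((K + 1) * T) < δ →
      ‖f r‖ ≤ m * Real.exp ((K + 1) * r) := by
    intro m hm hmδ
    have m_pos : 0 < m := (norm_nonneg _).trans_lt hm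
    refine image_norm_le_of_norm_deriv_right_lt_deriv_boundary
      (B' := fun t => m * (Real.exp ((K + 1) * t) * ((K + 1) * 1)))
      (fun t _ => (hf t).continuousAt.continuousWithinAt)
      (fun t _ => (hf t).hasDerivWithinAt) (by simpa using hm.le)
      (fun t => (((hasDerivAt_id' t).const_mul (K + 1)).exp).const_mul m) (fun t ht hft => ?_) hr
    have in_tube : ‖f t‖ < δ := by
      refine hft.trans_lt (lt_of_le_of_lt ?_ hmδ)
      gcongr
      exact ht.2.le
    calc ‖f' t‖ ≤ K * ‖f t‖ := bound t ht in_tube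
      _ = K * (m * Real.exp ((K + 1) * t)) := by rw [hft]
      _ < (K + 1) * (m * Real.exp ((K + 1) * t)) := by gcongr; exact lt_add_one K
      _ = m * (Real.exp ((K + 1) * t) * ((K + 1) * 1)) := by ring
  have tendsto_right : ∀ c : ℝ, Tendsto (fun m => m * c) (𝓝[>] ‖f 0‖) (𝓝 (‖f 0‖ * c)) :=
    fun c => (tendsto_id.mul_const c).mono_left nhdsWithin_le_nhds
  refine ge_of_tendsto (tendsto_right _) ?_
  filter_upwards [self_mem_nhdsWithin, (tendsto_right _).eventually_lt_const hδ] with m hm hmδ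
  exact fence m hm hmδ

variable {F : E → E} {γ : ℝ → E}

theorem exists_forall_norm_sub_le_of_isIntegralCurve (hF : ContDiff ℝ 1 F)
    (hγ : IsIntegralCurve γ fun _ => F) :
    ∃ C, ∃ δ > 0, ∀ η : ℝ → E, IsIntegralCurve η (fun _ => F) → ‖η 0 - γ 0‖ < δ →
      ∀ r ∈ Icc (0 : ℝ) 1, ‖η r - γ r‖ ≤ C * ‖η 0 - γ 0‖ := by
  obtain ⟨K, hK, δ, hδ, hlip⟩ :=
    exists_forall_norm_sub_le_mul_of_isCompact (isCompact_Icc.image hγ.continuous) hF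
  refine ⟨Real.exp (K + 1), δ / Real.exp (K + 1), by positivity, fun η hη h0 r hr => ?_⟩
  calc ‖η r - γ r‖ ≤ ‖η 0 - γ 0‖ * Real.exp ((K + 1) * r) :=
        norm_le_norm_mul_exp_of_norm_deriv_le (f := fun t => η t - γ t) (T := 1) hK
          (fun t => (hη t).sub (hγ t))
          (fun t ht => hlip (γ t) (mem_image_of_mem γ ⟨ht.1, ht.2.le⟩) (η t))
          (by simpa [lt_div_iff₀ (Real.exp_pos _)] using h0) hr
    _ ≤ ‖η 0 - γ 0‖ * Real.exp (K + 1) := by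
        gcongr
        exact mul_le_of_le_one_right (by positivity) hr.2
    _ = Real.exp (K + 1) * ‖η 0 - γ 0‖ := mul_comm _ _

theorem eq_of_isIntegralCurve_of_eq_zero (hF : ContDiff ℝ 1 F) {η : ℝ → E}
    (hγ : IsIntegralCurve γ fun _ => F) (hη : IsIntegralCurve η fun _ => F) (h0 : η 0 = γ 0)
    (t : ℝ) : η t = γ t := by
  obtain ⟨C, δ, hδ, hstable⟩ :=
    exists_forall_norm_sub_le_of_isIntegralCurve (hF.const_smul t) (hγ.comp_mul t)
  have := hstable _ (hη.comp_mul t) (by simpa [h0] using hδ) 1 (by simp)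
  simpa [h0, sub_eq_zero] using this

end IntegralCurve

/-- `χ` is the flow of the autonomous vector field `F`, defined for all times. -/
structure IsGlobalFlow {E : Type*} [NormedAddCommGroup E] [NormedSpace ℝ E] (F : E → E)
    (χ : ℝ → E → E) : Prop where
  apply_zero : ∀ w, χ 0 w = w
  isIntegralCurve : ∀ w, IsIntegralCurve (fun t => χ t w) fun _ => F

namespace IsGlobalFlow

open Set Filter Topology

variable {E : Type*} [NormedAddCommGroup E] [NormedSpace ℝ E] {F : E → E} {χ : ℝ → E → E}

theorem comp_mul (hχ : IsGlobalFlow F χ) (c : ℝ) : IsGlobalFlow (c • F) fun t => χ (t * c) where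
  apply_zero w := by simpa using hχ.apply_zero w
  isIntegralCurve w := (hχ.isIntegralCurve w).comp_mul c

theorem apply_apply (hχ : IsGlobalFlow F χ) (hF : ContDiff ℝ 1 F) (s r : ℝ) (w : E) :
    χ s (χ r w) = χ (s + r) w :=
  eq_of_isIntegralCurve_of_eq_zero hF ((hχ.isIntegralCurve w).comp_add r)
    (hχ.isIntegralCurve (χ r w)) (by simp [hχ.apply_zero]) s

theorem exists_eventually_norm_sub_le (hχ : IsGlobalFlow F χ) (hF : ContDiff ℝ 1 F) (t : ℝ)
    (w : E) :
    ∃ C, ∀ᶠ w' in 𝓝 w, ∀ r ∈ uIcc 0 t, ‖χ r w' - χ r w‖ ≤ C * ‖w' - w‖ := by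
  have hχt := hχ.comp_mul t
  obtain ⟨C, δ, hδ, hstable⟩ :=
    exists_forall_norm_sub_le_of_isIntegralCurve (hF.const_smul t) (hχt.isIntegralCurve w)
  refine ⟨C, ?_⟩
  filter_upwards [Metric.ball_mem_nhds w hδ] with w' hw' r hr
  obtain ⟨θ, hθ, rfl⟩ : ∃ θ ∈ Icc (0 : ℝ) 1, θ * t = r := by
    simpa [← segment_eq_uIcc, segment_eq_image] using hr
  simpa [hχ.apply_zero] using hstable _ (hχt.isIntegralCurve w')
    (by simpa [hχ.apply_zero, dist_eq_norm] using hw') θ hθ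

theorem eventually_forall_norm_sub_lt (hχ : IsGlobalFlow F χ) (hF : ContDiff ℝ 1 F) (t : ℝ)
    (w : E) {δ : ℝ} (hδ : 0 < δ) : ∀ᶠ w' in 𝓝 w, ∀ r ∈ uIcc 0 t, ‖χ r w' - χ r w‖ < δ := by
  obtain ⟨C, hC⟩ := hχ.exists_eventually_norm_sub_le hF t w
  have hsmall : ∀ᶠ w' in 𝓝 w, C * ‖w' - w‖ < δ :=
    ((continuous_const.mul (continuous_id.sub continuous_const).norm).tendsto' w 0
      (by simp)).eventually_lt_const hδ
  filter_upwards [hC, hsmall] with w' hCw' hw' r hr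
  exact (hCw' r hr).trans_lt hw'

theorem eventually_forall_norm_comp_sub_le {G : Type*} [NormedAddCommGroup G] {f : E → G}
    (hχ : IsGlobalFlow F χ) (hF : ContDiff ℝ 1 F) (hf : Continuous f) (t : ℝ) (w : E) {ε : ℝ}
    (hε : 0 < ε) :
    ∀ᶠ w' in 𝓝 w, ∀ r ∈ uIcc 0 t, ‖f (χ r w') - f (χ r w)‖ ≤ ε := by
  have horbit : IsCompact ((fun r => χ r w) '' uIcc 0 t) :=
    isCompact_uIcc.image (hχ.isIntegralCurve w).continuous
  obtain ⟨δ, hδ, hfδ⟩ := exists_forall_norm_sub_le_of_isCompact horbit hf hε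
  filter_upwards [hχ.eventually_forall_norm_sub_lt hF t w hδ] with w' hw' r hr
  exact hfδ _ (mem_image_of_mem _ hr) _ (hw' r hr)

theorem eventually_forall_norm_comp_sub_sub_fderiv_le {G : Type*} [NormedAddCommGroup G]
    [NormedSpace ℝ G] {f : E → G} (hχ : IsGlobalFlow F χ) (hF : ContDiff ℝ 1 F)
    (hf : ContDiff ℝ 1 f) (t : ℝ) (w : E) {ε : ℝ} (hε : 0 < ε) :
    ∀ᶠ w' in 𝓝 w, ∀ r ∈ uIcc 0 t,
      ‖f (χ r w') - f (χ r w) - fderiv ℝ f (χ r w) (χ r w' - χ r w)‖ ≤ ε * ‖w' - w‖ := by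
  have horbit : IsCompact ((fun r => χ r w) '' uIcc 0 t) :=
    isCompact_uIcc.image (hχ.isIntegralCurve w).continuous
  obtain ⟨C, hC⟩ := hχ.exists_eventually_norm_sub_le hF t w
  obtain ⟨ε', hε', hCε'⟩ := exists_pos_mul_lt hε C
  obtain ⟨δ, hδ, htaylor⟩ := exists_forall_norm_sub_sub_fderiv_le_of_isCompact horbit hf hε'
  filter_upwards [hC, hχ.eventually_forall_norm_sub_lt hF t w hδ] with w' hCw' hδw' r hr
  calc ‖f (χ r w') - f (χ r w) - fderiv ℝ f (χ r w) (χ r w' - χ r w)‖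
      ≤ ε' * ‖χ r w' - χ r w‖ := htaylor _ (mem_image_of_mem _ hr) _ (hδw' r hr)
    _ ≤ ε' * (C * ‖w' - w‖) := by gcongr; exact hCw' r hr
    _ = C * ε' * ‖w' - w‖ := by ring
    _ ≤ ε * ‖w' - w‖ := by gcongr

end IsGlobalFlow

section Linear

open Set

variable {E : Type*} [NormedAddCommGroup E] [NormedSpace ℝ E]

theorem isPicardLindelof_comp_of_norm_le_half {A : ℝ → E →L[ℝ] E} (hA : Continuous A)
    (hA_le : ∀ t ∈ Icc (0 : ℝ) 1, ‖A t‖ ≤ 1 / 2) :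
    IsPicardLindelof (fun t X => A t ∘L X) (⟨0, by simp⟩ : Icc (0 : ℝ) 1)
      (ContinuousLinearMap.id ℝ E) 1 0 1 (1 / 2) where
  lipschitzOnWith t ht := LipschitzOnWith.of_dist_le_mul fun X _ Y _ => by
    rw [dist_eq_norm, dist_eq_norm, ← ContinuousLinearMap.comp_sub]
    refine (ContinuousLinearMap.opNorm_comp_le _ _).trans ?_
    gcongr
    simpa using hA_le t ht
  continuousOn X _ := (hA.clm_comp continuous_const).continuousOn
  norm_le t ht X hX := by
    have norm_X_le : ‖X‖ ≤ 1 + 1 :=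
      (norm_le_norm_sub_add X (ContinuousLinearMap.id ℝ E)).trans
        (add_le_add (by simpa [dist_eq_norm] using hX) ContinuousLinearMap.norm_id_le)
    calc ‖A t ∘L X‖ ≤ ‖A t‖ * ‖X‖ := ContinuousLinearMap.opNorm_comp_le _ _
      _ ≤ 1 / 2 * (1 + 1) := by gcongr; exact hA_le t ht
      _ = 1 := by norm_num
  mul_max_le := by simp

theorem exists_fundamentalSolution_of_norm_le_half [CompleteSpace E] {A : ℝ → E →L[ℝ] E}
    (hA : Continuous A)
    (hA_le : ∀ t ∈ Icc (0 : ℝ) 1, ‖A t‖ ≤ 1 / 2) :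
    ∃ Φ : ℝ → E →L[ℝ] E, Φ 0 = ContinuousLinearMap.id ℝ E ∧
      ∀ t ∈ Icc (0 : ℝ) 1, HasDerivWithinAt Φ (A t ∘L Φ t) (Icc 0 1) t :=
  (isPicardLindelof_comp_of_norm_le_half hA hA_le).exists_eq_forall_mem_Icc_hasDerivWithinAt₀

end Linear

namespace IsGlobalFlow

open Set Filter Topology Asymptotics

variable {E : Type*} [NormedAddCommGroup E] [NormedSpace ℝ E] {F : E → E} {χ : ℝ → E → E}

theorem norm_sub_sub_apply_le (hχ : IsGlobalFlow F χ) {Φ : ℝ → E →L[ℝ] E}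
    (hΦ0 : Φ 0 = ContinuousLinearMap.id ℝ E) {w w' : E} {K ε : ℝ}
    (hΦ : ∀ t ∈ Icc (0 : ℝ) 1, HasDerivWithinAt Φ (fderiv ℝ F (χ t w) ∘L Φ t) (Icc 0 1) t)
    (hK : ∀ t ∈ Icc (0 : ℝ) 1, ‖fderiv ℝ F (χ t w)‖ ≤ K)
    (htaylor : ∀ t ∈ Icc (0 : ℝ) 1,
      ‖F (χ t w') - F (χ t w) - fderiv ℝ F (χ t w) (χ t w' - χ t w)‖ ≤ ε) :
    ‖χ 1 w' - χ 1 w - Φ 1 (w' - w)‖ ≤ gronwallBound 0 K ε 1 := by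
  have hΦ_apply : ∀ t ∈ Icc (0 : ℝ) 1, HasDerivWithinAt (fun r => Φ r (w' - w))
      (fderiv ℝ F (χ t w) (Φ t (w' - w))) (Icc 0 1) t := fun t ht => by
    simpa using (hΦ t ht).clm_apply (hasDerivWithinAt_const t _ (w' - w))
  have hdiff : ∀ t ∈ Icc (0 : ℝ) 1,
      HasDerivWithinAt (fun r => χ r w' - χ r w - Φ r (w' - w))
        (F (χ t w') - F (χ t w) - fderiv ℝ F (χ t w) (Φ t (w' - w))) (Icc 0 1) t := fun t ht =>
    ((hχ.isIntegralCurve w' t).hasDerivWithinAt.sub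
      (hχ.isIntegralCurve w t).hasDerivWithinAt).sub (hΦ_apply t ht)
  simpa using norm_le_gronwallBound_of_norm_deriv_right_le (a := 0) (b := 1) (δ := 0)
    (fun t ht => (hdiff t ht).continuousWithinAt)
    (fun t ht => (hdiff t (Ico_subset_Icc_self ht)).mono_of_mem_nhdsWithin
      (Icc_mem_nhdsGE_of_mem ht))
    (by simp [hχ.apply_zero, hΦ0])
    (fun t ht => by
      have ht' := Ico_subset_Icc_self ht
      calc ‖F (χ t w') - F (χ t w) - fderiv ℝ F (χ t w) (Φ t (w' - w))‖
          = ‖fderiv ℝ F (χ t w) (χ t w' - χ t w - Φ t (w' - w)) +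
              (F (χ t w') - F (χ t w) - fderiv ℝ F (χ t w) (χ t w' - χ t w))‖ := by
            rw [map_sub _ (χ t w' - χ t w)]; abel_nf
        _ ≤ K * ‖χ t w' - χ t w - Φ t (w' - w)‖ + ε :=
            norm_add_le_of_le ((fderiv ℝ F (χ t w)).le_of_opNorm_le (hK t ht') _)
              (htaylor t ht'))
    1 (by simp)

variable [CompleteSpace E]

theorem differentiableAt_one_of_norm_fderiv_le_half (hχ : IsGlobalFlow F χ)
    (hF : ContDiff ℝ 1 F) {w : E} (hw : ∀ t ∈ Icc (0 : ℝ) 1, ‖fderiv ℝ F (χ t w)‖ ≤ 1 / 2) :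
    DifferentiableAt ℝ (χ 1) w := by
  have hA : Continuous fun t => fderiv ℝ F (χ t w) :=
    (hF.continuous_fderiv one_ne_zero).comp (hχ.isIntegralCurve w).continuous
  obtain ⟨Φ, hΦ0, hΦ⟩ := exists_fundamentalSolution_of_norm_le_half hA hw
  suffices (fun w' => χ 1 w' - χ 1 w - Φ 1 (w' - w)) =o[𝓝 w] fun w' => w' - w from
    (HasFDerivAt.of_isLittleO this).differentiableAt
  refine isLittleO_iff.2 fun c hc => ?_
  obtain ⟨ε, hε, hεc⟩ := exists_pos_mul_lt hc (2 * (Real.exp (1 / 2) - 1))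
  filter_upwards [hχ.eventually_forall_norm_comp_sub_sub_fderiv_le hF hF 1 w hε] with w' htaylor
  rw [uIcc_of_le zero_le_one] at htaylor
  calc ‖χ 1 w' - χ 1 w - Φ 1 (w' - w)‖
      ≤ gronwallBound 0 (1 / 2) (ε * ‖w' - w‖) 1 := hχ.norm_sub_sub_apply_le hΦ0 hΦ hw htaylor
    _ = 2 * (Real.exp (1 / 2) - 1) * ε * ‖w' - w‖ := by
        rw [gronwallBound_of_K_ne_0 (by norm_num)]; ring_nf
    _ ≤ c * ‖w' - w‖ := by gcongr

theorem differentiableAt_natCast (hχ : IsGlobalFlow F χ) (hF : ContDiff ℝ 1 F) {w : E} (N : ℕ)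
    (hw : ∀ t ∈ Icc (0 : ℝ) N, ‖fderiv ℝ F (χ t w)‖ ≤ 1 / 2) :
    DifferentiableAt ℝ (χ N) w := by
  induction N with
  | zero =>
    have : χ (0 : ℕ) = id := funext fun v => by simpa using hχ.apply_zero v
    exact this ▸ differentiableAt_id
  | succ N ih =>
    have hcomp : χ (N + 1 : ℕ) = χ 1 ∘ χ N := funext fun v => by
      simp [hχ.apply_apply hF, add_comm]
    rw [hcomp]
    refine DifferentiableAt.comp w (hχ.differentiableAt_one_of_norm_fderiv_le_half hF ?_)
      (ih fun t ht => hw t ⟨ht.1, ht.2.trans (by simp)⟩)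
    intro t ht
    rw [hχ.apply_apply hF]
    exact hw _ ⟨add_nonneg ht.1 N.cast_nonneg, by push_cast; linarith [ht.2]⟩

protected theorem differentiable (hχ : IsGlobalFlow F χ) (hF : ContDiff ℝ 1 F) (t : ℝ) :
    Differentiable ℝ (χ t) := by
  intro w
  have hA : Continuous fun s => fderiv ℝ F (χ (s * t) w) :=
    (hF.continuous_fderiv one_ne_zero).comp
      ((hχ.isIntegralCurve w).continuous.comp (continuous_mul_const t))
  obtain ⟨K, hK⟩ := (isCompact_Icc (a := (0 : ℝ)) (b := 1)).exists_bound_of_continuousOn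
    hA.continuousOn
  have K_nonneg : 0 ≤ K := (norm_nonneg _).trans (hK 0 (by simp))
  obtain ⟨N, hN⟩ := exists_nat_gt (2 * |t| * K)
  have N_pos : (0 : ℝ) < N := lt_of_le_of_lt (by positivity) hN
  have hslow := (hχ.comp_mul (t / N)).differentiableAt_natCast (w := w) (hF.const_smul (t / N)) N ?_
  · simpa [mul_div_cancel₀ t N_pos.ne'] using hslow
  intro r hr
  have hKr : ‖fderiv ℝ F (χ (r * (t / N)) w)‖ ≤ K := by
    rw [mul_div_left_comm, mul_comm]
    exact hK _ ⟨div_nonneg hr.1 N_pos.le, (div_le_one N_pos).2 hr.2⟩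
  calc ‖fderiv ℝ ((t / N) • F) (χ (r * (t / N)) w)‖
      = |t| / N * ‖fderiv ℝ F (χ (r * (t / N)) w)‖ := by
        rw [fderiv_const_smul (hF.differentiable one_ne_zero _), norm_smul, Real.norm_eq_abs,
          abs_div, Nat.abs_cast]
    _ ≤ |t| / N * K := by gcongr
    _ ≤ 1 / 2 := by rw [div_mul_eq_mul_div, div_le_iff₀ N_pos]; linarith

end IsGlobalFlow

section Hamiltonian

open Set Filter Topology

variable {E : Type*} [NormedAddCommGroup E] [InnerProductSpace ℝ E] [CompleteSpace E]

/-- The Hamiltonian vector field `(d_ζ H, -d_z H)` of `H` on the phase space `E × E`, with the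
position `z` as first component and the momentum `ζ` as second. -/
def hamiltonianField (H : E × E → ℝ) (w : E × E) : E × E :=
  (gradient (fun ζ => H (w.1, ζ)) w.2, -gradient (fun z => H (z, w.2)) w.1)

/-- The negative `H - ζ · d_ζ H` of the Lagrangian of `H`, as a function on phase space; its time
integral along an orbit is minus the action. -/
def negLagrangian (H : E × E → ℝ) (w : E × E) : ℝ :=
  H w - ⟪w.2, (hamiltonianField H w).1⟫

variable {H : E × E → ℝ} {χ : ℝ → E × E → E × E}

theorem hamiltonianField_eq_toDual_symm (hH : Differentiable ℝ H) (w : E × E) :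
    hamiltonianField H w =
      ((InnerProductSpace.toDual ℝ E).symm (fderiv ℝ H w ∘L .inr ℝ E E),
        -(InnerProductSpace.toDual ℝ E).symm (fderiv ℝ H w ∘L .inl ℝ E E)) := by
  have hfderiv : HasFDerivAt H (fderiv ℝ H w) (w.1, w.2) := (hH w).hasFDerivAt
  simp only [hamiltonianField, gradient]
  congr 3
  · exact (hfderiv.comp w.2 (hasFDerivAt_prodMk_right w.1 w.2)).fderiv
  · exact (hfderiv.comp w.1 (hasFDerivAt_prodMk_left w.1 w.2)).fderiv

theorem fderiv_apply_eq_inner_hamiltonianField (hH : Differentiable ℝ H) (w v : E × E) :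
    fderiv ℝ H w v = ⟪(hamiltonianField H w).1, v.2⟫ - ⟪(hamiltonianField H w).2, v.1⟫ := by
  simp [hamiltonianField_eq_toDual_symm hH, inner_neg_left, ← map_add]

theorem contDiff_hamiltonianField (hH : ContDiff ℝ 2 H) : ContDiff ℝ 1 (hamiltonianField H) := by
  have hfderiv : ContDiff ℝ 1 (fderiv ℝ H) := hH.fderiv_right (by norm_num)
  have hpartial (L : E →L[ℝ] E × E) :
      ContDiff ℝ 1 fun w => (InnerProductSpace.toDual ℝ E).symm (fderiv ℝ H w ∘L L) :=
    (InnerProductSpace.toDual ℝ E).symm.contDiff.comp (hfderiv.clm_comp contDiff_const)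
  rw [funext (hamiltonianField_eq_toDual_symm (hH.differentiable two_ne_zero))]
  exact (hpartial _).prodMk (hpartial _).neg

theorem continuous_negLagrangian (hH : ContDiff ℝ 2 H) : Continuous (negLagrangian H) :=
  hH.continuous.sub (continuous_snd.inner (contDiff_hamiltonianField hH).continuous.fst)

-- The left side is the time derivative of `∫ σ(y) - ∫ σ(x) + ⟪x.2, y.1 - x.1⟫` along two orbits
-- `x` and `y`, where `σ = negLagrangian H`.
theorem negLagrangian_sub_add_inner_eq (hH : Differentiable ℝ H) (x y : E × E) :
    negLagrangian H y - negLagrangian H x +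
        (⟪x.2, (hamiltonianField H y).1 - (hamiltonianField H x).1⟫ +
          ⟪(hamiltonianField H x).2, y.1 - x.1⟫) =
      H y - H x - fderiv ℝ H x (y - x) -
        ⟪y.2 - x.2, (hamiltonianField H y).1 - (hamiltonianField H x).1⟫ := by
  rw [fderiv_apply_eq_inner_hamiltonianField hH, real_inner_comm (y - x).2]
  simp only [negLagrangian, Prod.fst_sub, Prod.snd_sub, inner_sub_left, inner_sub_right]
  ring

namespace IsGlobalFlow

theorem hasDerivAt_integral_negLagrangian_sub_add_inner
    (hχ : IsGlobalFlow (hamiltonianField H) χ) (hH : ContDiff ℝ 2 H) (w w' : E × E) (t : ℝ) :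
    HasDerivAt
      (fun s => (∫ r in (0 : ℝ)..s, negLagrangian H (χ r w')) -
        (∫ r in (0 : ℝ)..s, negLagrangian H (χ r w)) + ⟪(χ s w).2, (χ s w').1 - (χ s w).1⟫)
      (H (χ t w') - H (χ t w) - fderiv ℝ H (χ t w) (χ t w' - χ t w) -
        ⟪(χ t w').2 - (χ t w).2,
          (hamiltonianField H (χ t w')).1 - (hamiltonianField H (χ t w)).1⟫) t := by
  have haction (v : E × E) : HasDerivAt (fun s => ∫ r in (0 : ℝ)..s, negLagrangian H (χ r v))
      (negLagrangian H (χ t v)) t :=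
    ((continuous_negLagrangian hH).comp (hχ.isIntegralCurve v).continuous).integral_hasStrictDerivAt
      0 t |>.hasDerivAt
  have hposition (v : E × E) : HasDerivAt (fun s => (χ s v).1) (hamiltonianField H (χ t v)).1 t :=
    (ContinuousLinearMap.fst ℝ E E).hasFDerivAt.comp_hasDerivAt t (hχ.isIntegralCurve v t)
  have hmomentum : HasDerivAt (fun s => (χ s w).2) (hamiltonianField H (χ t w)).2 t :=
    (ContinuousLinearMap.snd ℝ E E).hasFDerivAt.comp_hasDerivAt t (hχ.isIntegralCurve w t)
  rw [← negLagrangian_sub_add_inner_eq (hH.differentiable two_ne_zero)]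
  exact ((haction w').sub (haction w)).add
    (hmomentum.inner ℝ ((hposition w').sub (hposition w)))

theorem eventually_norm_sub_sub_fderiv_sub_inner_le (hχ : IsGlobalFlow (hamiltonianField H) χ)
    (hH : ContDiff ℝ 2 H) (t : ℝ) (w : E × E) {ε : ℝ} (hε : 0 < ε) :
    ∀ᶠ w' in 𝓝 w, ∀ r ∈ uIcc 0 t,
      ‖H (χ r w') - H (χ r w) - fderiv ℝ H (χ r w) (χ r w' - χ r w) -
        ⟪(χ r w').2 - (χ r w).2,
          (hamiltonianField H (χ r w')).1 - (hamiltonianField H (χ r w)).1⟫‖ ≤ ε * ‖w' - w‖ := by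
  have hF := contDiff_hamiltonianField hH
  obtain ⟨C, hC⟩ := hχ.exists_eventually_norm_sub_le hF t w
  obtain ⟨ε', hε', hCε'⟩ := exists_pos_mul_lt hε (1 + C)
  filter_upwards [hC,
    hχ.eventually_forall_norm_comp_sub_sub_fderiv_le hF (hH.of_le one_le_two) t w hε',
    hχ.eventually_forall_norm_comp_sub_le hF hF.continuous t w hε'] with w' hCw' htaylor hfield r hr
  have hpairing := calc
    ‖⟪(χ r w').2 - (χ r w).2,
        (hamiltonianField H (χ r w')).1 - (hamiltonianField H (χ r w)).1⟫‖
      ≤ ‖χ r w' - χ r w‖ * ‖hamiltonianField H (χ r w') - hamiltonianField H (χ r w)‖ :=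
        (norm_inner_le_norm _ _).trans
          (mul_le_mul (norm_snd_le (χ r w' - χ r w))
            (norm_fst_le (hamiltonianField H (χ r w') - hamiltonianField H (χ r w)))
            (norm_nonneg _) (norm_nonneg _))
    _ ≤ C * ‖w' - w‖ * ε' :=
        mul_le_mul (hCw' r hr) (hfield r hr) (norm_nonneg _) ((norm_nonneg _).trans (hCw' r hr))
  calc _
    _ ≤ ε' * ‖w' - w‖ + C * ‖w' - w‖ * ε' := norm_sub_le_of_le (htaylor r hr) hpairing
    _ = (1 + C) * ε' * ‖w' - w‖ := by ring
    _ ≤ ε * ‖w' - w‖ := by gcongr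

theorem hasFDerivAt_integral_negLagrangian_add_inner
    (hχ : IsGlobalFlow (hamiltonianField H) χ) (hH : ContDiff ℝ 2 H) (t : ℝ) (w : E × E) :
    HasFDerivAt
      (fun w' => (∫ r in (0 : ℝ)..t, negLagrangian H (χ r w')) + ⟪(χ t w).2, (χ t w').1⟫)
      (innerSL ℝ w.2 ∘L .fst ℝ E E) w := by
  refine .of_isLittleO (Asymptotics.isLittleO_iff.2 fun c hc => ?_)
  obtain ⟨ε, hε, hεc⟩ := exists_pos_mul_lt hc |t|
  filter_upwards [hχ.eventually_norm_sub_sub_fderiv_sub_inner_le hH t w hε] with w' hw'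
  have hmean := (convex_uIcc 0 t).norm_image_sub_le_of_norm_hasDerivWithin_le
    (fun r _ => (hχ.hasDerivAt_integral_negLagrangian_sub_add_inner hH w w' r).hasDerivWithinAt)
    hw' left_mem_uIcc right_mem_uIcc
  simp only [intervalIntegral.integral_same, hχ.apply_zero, sub_self, zero_add, sub_zero] at hmean
  calc ‖(∫ r in (0 : ℝ)..t, negLagrangian H (χ r w')) + ⟪(χ t w).2, (χ t w').1⟫ -
        ((∫ r in (0 : ℝ)..t, negLagrangian H (χ r w)) + ⟪(χ t w).2, (χ t w).1⟫) -
        ⟪w.2, (w' - w).1⟫‖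
      = ‖(∫ r in (0 : ℝ)..t, negLagrangian H (χ r w')) -
          (∫ r in (0 : ℝ)..t, negLagrangian H (χ r w)) + ⟪(χ t w).2, (χ t w').1 - (χ t w).1⟫ -
          ⟪w.2, w'.1 - w.1⟫‖ := by
        rw [inner_sub_right, Prod.fst_sub]; ring_nf
    _ ≤ ε * ‖w' - w‖ * ‖t‖ := hmean
    _ = |t| * ε * ‖w' - w‖ := by rw [Real.norm_eq_abs]; ring
    _ ≤ c * ‖w' - w‖ := by gcongr

theorem hasFDerivAt_integral_negLagrangian
    (hχ : IsGlobalFlow (hamiltonianField H) χ) (hH : ContDiff ℝ 2 H) (t : ℝ) (w : E × E) :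
    HasFDerivAt (fun w' => ∫ r in (0 : ℝ)..t, negLagrangian H (χ r w'))
      (innerSL ℝ w.2 ∘L .fst ℝ E E - innerSL ℝ (χ t w).2 ∘L .fst ℝ E E ∘L fderiv ℝ (χ t) w) w := by
  have hχt := (hχ.differentiable (contDiff_hamiltonianField hH) t w).hasFDerivAt
  have hpairing : HasFDerivAt (fun w' => ⟪(χ t w).2, (χ t w').1⟫)
      (innerSL ℝ (χ t w).2 ∘L .fst ℝ E E ∘L fderiv ℝ (χ t) w) w :=
    (innerSL ℝ (χ t w).2).hasFDerivAt.comp w hχt.fst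
  simpa using (hχ.hasFDerivAt_integral_negLagrangian_add_inner hH t w).fun_sub hpairing

end IsGlobalFlow

theorem statement11_general (hH : ContDiff ℝ 2 H) (hχ : IsGlobalFlow (hamiltonianField H) χ)
    (t : ℝ) (z ζ v : E) :
    fderiv ℝ (fun ζ' => ∫ r in (0 : ℝ)..t, negLagrangian H (χ r (z, ζ'))) ζ v +
      ⟪(χ t (z, ζ)).2, fderiv ℝ (fun ζ' => (χ t (z, ζ')).1) ζ v⟫ = 0 := by
  have hχt := (hχ.differentiable (contDiff_hamiltonianField hH) t (z, ζ)).hasFDerivAt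
  have hslice := hasFDerivAt_prodMk_right (𝕜 := ℝ) z ζ
  have haction := (hχ.hasFDerivAt_integral_negLagrangian hH t (z, ζ)).comp ζ hslice
  have hposition := (hχt.comp ζ hslice).fst
  simp only [Function.comp_def] at haction hposition
  rw [haction.fderiv, hposition.fderiv]
  simp

end Hamiltonian

theorem contDiff_ham {n : ℕ} {a : Fin n → Fin n → En n → ℝ} {m : WithTop ℕ∞}
    (ha : ∀ i j, ContDiff ℝ m (a i j)) : ContDiff ℝ m (ham a) := by
  have hcoord (k : Fin n) : ContDiff ℝ m fun w : En n × En n => w.2 k :=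
    (EuclideanSpace.proj k : En n →L[ℝ] ℝ).contDiff.comp contDiff_snd
  exact .sum fun i _ => .sum fun j _ =>
    (((ha i j).comp contDiff_fst).mul (hcoord i)).mul (hcoord j)

/-- The phase identity
`∂_{ζᵢ} [∫₀ᵗ (a − ζ·d_ζ a)(χ_r(z,ζ)) dr] + ζ_t · ∂_{ζᵢ} z_t = 0`, where the
`ζᵢ`-derivative is in the initial frequency variable. -/
theorem statement11 {n : ℕ} (hn : 2 ≤ n) (μ : ℝ) (hμ : 1 ≤ μ) (Cα : ℕ → ℝ)
    (a : Fin n → Fin n → En n → ℝ) (ha : HamSetup μ Cα a)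
    (χ : ℝ → En n × En n → En n × En n) (hχ : IsHamFlow a χ) :
    ∀ (t : ℝ) (z ζ : En n) (i : Fin n),
      fderiv ℝ (fun ζ' => ∫ r in (0 : ℝ)..t, hamSigma a (χ r (z, ζ'))) ζ (ev i) +
        ⟪(χ t (z, ζ)).2, fderiv ℝ (fun ζ' => (χ t (z, ζ')).1) ζ (ev i)⟫ = 0 := by
  exact fun t z ζ i => statement11_general
    (contDiff_ham fun i j => contDiff_infty.1 (ha.1 i j) 2) ⟨hχ.1, hχ.2⟩ t z ζ (ev i)
end
end

section
/- Under the Hamiltonian flow setup, there exist constants ε > 0 and C, depending only on n and the constants C_α, such that for all μ ≥ 1, all t with μ^{-2} ≤ t ≤ ε μ^{-1}, all x, z ∈ ℝ^n, and all ξ, ζ ∈ ℝ^n with μ/4 ≤ |ξ| ≤ 4μ, μ/4 ≤ |ζ| ≤ 4μ and |ξ − ζ| ≤ t^{-1/2}, one has t^{-1/2} | (x − z) − (d_ζ ζ_t(z,ζ)) ( z_t(x,ξ) − z_t(z,ζ) ) | ≤ C ( 1 + μ |x − z|² ), where d_ζ ζ_t(z,ζ) denotes the n × n Jacobian matrix of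 ζ_t with respect to the initial frequency variable, acting on the vector z_t(x,ξ) − z_t(z,ζ) by the pairing used in the paper. -/
open MeasureTheory Complex Real
open scoped ENNReal NNReal RealInnerProductSpace

noncomputable section

/-!
The derivative of a Hamiltonian flow preserves the symplectic form `σ`. Pair the variation of
`χ_t(z, ζ)` in a direction `(0, h)` with the difference `χ_t(x, ξ) - χ_t(z, ζ)`: if the difference
solved the linearized equation exactly, `σ` would keep its initial value `⟪x - z, h⟫` up to sign.
At time `t` the pairing is `⟪z_t(x, ξ) - z_t(z, ζ), d_ζ ζ_t h⟫` plus a term containing `d_ζ z_t h`,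
which is small for short times, and the defect is governed by the second order Taylor remainder of
the vector field along the two trajectories. Since the Hamiltonian is quadratic in the momentum,
dilating momenta by `μ⁻¹` and time by `μ` reduces to unit frequency and times of size `ε`. The
third derivatives of the coefficients, of size `√μ`, enter only through the dependence of the force
on the square of the position difference.
-/

section ODE

variable {X : Type*} [NormedAddCommGroup X] [NormedSpace ℝ X]

theorem gronwallBound_le_add_mul_exp {δ K ε x : ℝ} (hK : 0 ≤ K) (hε : 0 ≤ ε) :
    gronwallBound δ K ε x ≤ (δ + ε * x) * rexp (K * x) := by
  rcases hK.eq_or_lt with rfl | hK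
  · simp [gronwallBound_K0]
  have exp_sub_one_le : rexp (K * x) - 1 ≤ K * x * rexp (K * x) := by
    have h := mul_le_mul_of_nonneg_right (add_one_le_exp (-(K * x))) (exp_pos (K * x)).le
    rw [← Real.exp_add, neg_add_cancel, Real.exp_zero] at h
    linarith
  rw [gronwallBound_of_K_ne_0 hK.ne']
  calc δ * rexp (K * x) + ε / K * (rexp (K * x) - 1)
      ≤ δ * rexp (K * x) + ε / K * (K * x * rexp (K * x)) := by gcongr
    _ = (δ + ε * x) * rexp (K * x) := by field_simp

theorem norm_le_two_mul_of_norm_deriv_le {f f' : ℝ → X} {K T δ ε : ℝ} (hK : 0 ≤ K)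
    (hKT : K * T ≤ 1 / 2) (hε : 0 ≤ ε)
    (hf : ∀ s ∈ Set.Icc 0 T, HasDerivWithinAt f (f' s) (Set.Icc 0 T) s)
    (hf₀ : ‖f 0‖ ≤ δ) (hf' : ∀ s ∈ Set.Icc 0 T, ‖f' s‖ ≤ K * ‖f s‖ + ε) :
    ∀ s ∈ Set.Icc 0 T, ‖f s‖ ≤ 2 * (δ + ε * T) := by
  intro s hs
  have hδ : 0 ≤ δ := (norm_nonneg _).trans hf₀
  have gronwall : ‖f s‖ ≤ gronwallBound δ K ε (s - 0) :=
    norm_le_gronwallBound_of_norm_deriv_right_le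
      (fun s hs => (hf s hs).continuousWithinAt)
      (fun s hs => (hf s ⟨hs.1, hs.2.le⟩).mono_of_mem_nhdsWithin (Icc_mem_nhdsGE_of_mem hs))
      hf₀ (fun s hs => hf' s ⟨hs.1, hs.2.le⟩) s hs
  have hT : 0 ≤ T := hs.1.trans hs.2
  have exp_le_two : rexp (K * T) ≤ 2 := by
    rw [← Real.le_log_iff_exp_le two_pos]
    linarith [Real.log_two_gt_d9]
  calc ‖f s‖ ≤ (δ + ε * s) * rexp (K * s) := by
        simpa using gronwall.trans (gronwallBound_le_add_mul_exp hK hε)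
    _ ≤ (δ + ε * T) * rexp (K * T) := by
        have := hs.2
        gcongr
    _ ≤ (δ + ε * T) * 2 := by gcongr
    _ = 2 * (δ + ε * T) := mul_comm _ _

theorem norm_sub_le_of_norm_deriv_le_Icc {f f' : ℝ → X} {C T : ℝ} (hC : 0 ≤ C)
    (hf : ∀ s ∈ Set.Icc 0 T, HasDerivWithinAt f (f' s) (Set.Icc 0 T) s)
    (hf' : ∀ s ∈ Set.Icc 0 T, ‖f' s‖ ≤ C) : ∀ s ∈ Set.Icc 0 T, ‖f s - f 0‖ ≤ C * T := by
  intro s hs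
  have hT : 0 ≤ T := hs.1.trans hs.2
  calc ‖f s - f 0‖ ≤ C * ‖s - 0‖ :=
        (convex_Icc 0 T).norm_image_sub_le_of_norm_hasDerivWithin_le hf hf' ⟨le_rfl, hT⟩ hs
    _ ≤ C * T := by
        rw [sub_zero, Real.norm_of_nonneg hs.1]
        gcongr
        exact hs.2

/-- The operator-valued solution on `[0, T]` of the linear equation `Y' = A Y` with `Y 0 = id`. -/
structure IsFundamentalSolution (A : ℝ → X →L[ℝ] X) (T : ℝ) (Y : ℝ → X →L[ℝ] X) : Prop where
  initial : Y 0 = ContinuousLinearMap.id ℝ X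
  hasDerivWithinAt : ∀ s ∈ Set.Icc 0 T, HasDerivWithinAt Y ((A s).comp (Y s)) (Set.Icc 0 T) s

namespace IsFundamentalSolution

variable {A Y : ℝ → X →L[ℝ] X} {T K : ℝ}

theorem apply_hasDerivWithinAt (hY : IsFundamentalSolution A T Y) (v : X) {s : ℝ}
    (hs : s ∈ Set.Icc 0 T) :
    HasDerivWithinAt (fun s => Y s v) (A s (Y s v)) (Set.Icc 0 T) s := by
  simpa using (hY.hasDerivWithinAt s hs).clm_apply (hasDerivWithinAt_const s _ v)

theorem norm_apply_le (hY : IsFundamentalSolution A T Y) (hK : 0 ≤ K) (hKT : K * T ≤ 1 / 2)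
    (hA : ∀ s ∈ Set.Icc 0 T, ‖A s‖ ≤ K) (v : X) {s : ℝ} (hs : s ∈ Set.Icc 0 T) :
    ‖Y s v‖ ≤ 2 * ‖v‖ := by
  simpa using norm_le_two_mul_of_norm_deriv_le (δ := ‖v‖) hK hKT le_rfl
    (fun _ => hY.apply_hasDerivWithinAt v) (by simp [hY.initial])
    (fun s hs => by simpa using (A s).le_of_opNorm_le (hA s hs) (Y s v)) s hs

theorem exists_of_norm_le [CompleteSpace X] (hAc : ContinuousOn A (Set.Icc 0 T)) (hT : 0 ≤ T)
    (hK : 0 ≤ K) (hKT : K * T ≤ 1 / 2) (hA : ∀ s ∈ Set.Icc 0 T, ‖A s‖ ≤ K) :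
    ∃ Y, IsFundamentalSolution A T Y := by
  lift K to ℝ≥0 using hK
  have norm_comp_le : ∀ s ∈ Set.Icc 0 T, ∀ Z : X →L[ℝ] X, ‖(A s).comp Z‖ ≤ K * ‖Z‖ :=
    fun s hs Z => (ContinuousLinearMap.opNorm_comp_le _ _).trans (by gcongr; exact hA s hs)
  have norm_le_two : ∀ Z ∈ Metric.closedBall (ContinuousLinearMap.id ℝ X) 1, ‖Z‖ ≤ 2 :=
    fun Z hZ => by
      have := norm_le_norm_add_norm_sub' Z (ContinuousLinearMap.id ℝ X)
      have := ContinuousLinearMap.norm_id_le (𝕜 := ℝ) (E := X)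
      rw [mem_closedBall_iff_norm] at hZ
      linarith
  have picard : IsPicardLindelof (fun s Z => (A s).comp Z)
      (tmin := 0) (tmax := T) ⟨0, le_rfl, hT⟩ (ContinuousLinearMap.id ℝ X) 1 0 (2 * K) K := by
    refine ⟨fun s hs => ?_, fun Z _ => ?_, fun s hs Z hZ => ?_, ?_⟩
    · refine LipschitzOnWith.of_dist_le_mul fun Z _ Z' _ => ?_
      rw [dist_eq_norm, dist_eq_norm, ← ContinuousLinearMap.comp_sub]
      exact norm_comp_le s hs _
    · exact hAc.clm_comp continuousOn_const
    · have := mul_le_mul_of_nonneg_left (norm_le_two Z (by simpa using hZ)) K.coe_nonneg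
      push_cast
      linarith [norm_comp_le s hs Z]
    · simp only [NNReal.coe_mul, NNReal.coe_ofNat, sub_zero, sub_self, max_eq_left hT,
        NNReal.coe_one, NNReal.coe_zero]
      linarith
  obtain ⟨Y, hY₀, hY⟩ := picard.exists_eq_forall_mem_Icc_hasDerivWithinAt₀
  exact ⟨Y, hY₀, hY⟩

end IsFundamentalSolution

/-- `χ` is the global flow of the autonomous vector field `F`. -/
def IsFlow (F : X → X) (χ : ℝ → X → X) : Prop :=
  (∀ w, χ 0 w = w) ∧ ∀ w t, HasDerivAt (fun s => χ s w) (F (χ t w)) t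

namespace IsFlow

variable {F : X → X} {L : X → X →L[ℝ] X} {χ : ℝ → X → X} {S : Set X} {K C T : ℝ} {w w' : X}

theorem continuous_trajectory (hχ : IsFlow F χ) (w : X) : Continuous fun s => χ s w :=
  continuous_iff_continuousAt.2 fun s => (hχ.2 w s).continuousAt

theorem sub_hasDerivWithinAt (hχ : IsFlow F χ) (w w' : X) (I : Set ℝ) (s : ℝ) :
    HasDerivWithinAt (fun s => χ s w' - χ s w) (F (χ s w') - F (χ s w)) I s :=
  ((hχ.2 w' s).sub (hχ.2 w s)).hasDerivWithinAt

theorem norm_sub_le (hχ : IsFlow F χ) (hK : 0 ≤ K) (hKT : K * T ≤ 1 / 2)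
    (hF : ∀ w ∈ S, ∀ w' ∈ S, ‖F w' - F w‖ ≤ K * ‖w' - w‖)
    (hw : ∀ s ∈ Set.Icc 0 T, χ s w ∈ S) (hw' : ∀ s ∈ Set.Icc 0 T, χ s w' ∈ S) :
    ∀ s ∈ Set.Icc 0 T, ‖χ s w' - χ s w‖ ≤ 2 * ‖w' - w‖ := by
  intro s hs
  simpa using norm_le_two_mul_of_norm_deriv_le (δ := ‖w' - w‖) hK hKT le_rfl
    (fun s _ => hχ.sub_hasDerivWithinAt w w' _ s) (by rw [hχ.1, hχ.1])
    (fun s hs => by simpa using hF _ (hw s hs) _ (hw' s hs)) s hs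

theorem norm_sub_sub_fundamentalSolution_le (hχ : IsFlow F χ) (hK : 0 ≤ K) (hC : 0 ≤ C)
    (hKT : K * T ≤ 1 / 2) (hL : ∀ w ∈ S, ‖L w‖ ≤ K)
    (hF : ∀ w ∈ S, ∀ w' ∈ S, ‖F w' - F w‖ ≤ K * ‖w' - w‖)
    (hF₂ : ∀ w ∈ S, ∀ w' ∈ S, ‖F w' - F w - L w (w' - w)‖ ≤ C * ‖w' - w‖ ^ 2)
    (hw : ∀ s ∈ Set.Icc 0 T, χ s w ∈ S) (hw' : ∀ s ∈ Set.Icc 0 T, χ s w' ∈ S)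
    {Y : ℝ → X →L[ℝ] X} (hY : IsFundamentalSolution (fun s => L (χ s w)) T Y) :
    ∀ s ∈ Set.Icc 0 T, ‖χ s w' - χ s w - Y s (w' - w)‖ ≤ 8 * C * T * ‖w' - w‖ ^ 2 := by
  intro s hs
  have norm_deriv_le : ∀ s ∈ Set.Icc 0 T,
      ‖F (χ s w') - F (χ s w) - L (χ s w) (Y s (w' - w))‖ ≤
        K * ‖χ s w' - χ s w - Y s (w' - w)‖ + C * (2 * ‖w' - w‖) ^ 2 := fun s hs =>
    calc ‖F (χ s w') - F (χ s w) - L (χ s w) (Y s (w' - w))‖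
        = ‖L (χ s w) (χ s w' - χ s w - Y s (w' - w)) +
            (F (χ s w') - F (χ s w) - L (χ s w) (χ s w' - χ s w))‖ := by
          rw [map_sub (L (χ s w)) (χ s w' - χ s w)]
          congr 1
          abel
      _ ≤ K * ‖χ s w' - χ s w - Y s (w' - w)‖ + C * ‖χ s w' - χ s w‖ ^ 2 :=
          norm_add_le_of_le ((L (χ s w)).le_of_opNorm_le (hL _ (hw s hs)) _)
            (hF₂ _ (hw s hs) _ (hw' s hs))
      _ ≤ K * ‖χ s w' - χ s w - Y s (w' - w)‖ + C * (2 * ‖w' - w‖) ^ 2 := by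
          gcongr
          exact hχ.norm_sub_le hK hKT hF hw hw' s hs
  calc ‖χ s w' - χ s w - Y s (w' - w)‖ ≤ 2 * (0 + C * (2 * ‖w' - w‖) ^ 2 * T) :=
        norm_le_two_mul_of_norm_deriv_le hK hKT (by positivity)
          (fun s hs => (hχ.sub_hasDerivWithinAt w w' _ s).sub
            (hY.apply_hasDerivWithinAt (w' - w) hs))
          (by simp [hχ.1, hY.initial]) norm_deriv_le s hs
    _ = 8 * C * T * ‖w' - w‖ ^ 2 := by ring

theorem hasFDerivAt (hχ : IsFlow F χ) (hK : 0 ≤ K) (hC : 0 ≤ C) (hKT : K * T ≤ 1 / 2)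
    (hL : ∀ w ∈ S, ‖L w‖ ≤ K)
    (hF : ∀ w ∈ S, ∀ w' ∈ S, ‖F w' - F w‖ ≤ K * ‖w' - w‖)
    (hF₂ : ∀ w ∈ S, ∀ w' ∈ S, ‖F w' - F w - L w (w' - w)‖ ≤ C * ‖w' - w‖ ^ 2)
    (hS : ∀ᶠ w' in nhds w, ∀ s ∈ Set.Icc 0 T, χ s w' ∈ S)
    {Y : ℝ → X →L[ℝ] X} (hY : IsFundamentalSolution (fun s => L (χ s w)) T Y)
    {s : ℝ} (hs : s ∈ Set.Icc 0 T) : HasFDerivAt (χ s) (Y s) w := by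
  have isBigO : (fun w' => χ s w' - χ s w - Y s (w' - w)) =O[nhds w] fun w' => ‖w' - w‖ ^ 2 := by
    refine Asymptotics.IsBigO.of_bound (8 * C * T) ?_
    filter_upwards [hS] with w' hw'
    simpa using hχ.norm_sub_sub_fundamentalSolution_le hK hC hKT hL hF hF₂ hS.self_of_nhds hw' hY
      s hs
  exact .of_isLittleO (isBigO.trans_isLittleO (Asymptotics.isLittleO_pow_sub_sub w one_lt_two))

end IsFlow

end ODE

section Symplectic

variable {E : Type*} [NormedAddCommGroup E] [InnerProductSpace ℝ E]

/-- The canonical symplectic form on phase space `E × E`, whose first factor is position and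
second factor momentum. -/
def symplecticForm (Y V : E × E) : ℝ := ⟪Y.2, V.1⟫ - ⟪Y.1, V.2⟫

/-- Elements of the Lie algebra of the group of linear symplectic maps. -/
def IsInfinitesimallySymplectic (L : E × E →L[ℝ] E × E) : Prop :=
  ∀ Y V, symplecticForm (L Y) V + symplecticForm Y (L V) = 0

theorem norm_symplecticForm_le {Y V : E × E} {y₁ y₂ v₁ v₂ : ℝ} (hY₁ : ‖Y.1‖ ≤ y₁)
    (hY₂ : ‖Y.2‖ ≤ y₂) (hV₁ : ‖V.1‖ ≤ v₁) (hV₂ : ‖V.2‖ ≤ v₂) :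
    ‖symplecticForm Y V‖ ≤ y₂ * v₁ + y₁ * v₂ := by
  have hy₁ := (norm_nonneg _).trans hY₁
  have hy₂ := (norm_nonneg _).trans hY₂
  exact norm_sub_le_of_le ((norm_inner_le_norm _ _).trans (by gcongr))
    ((norm_inner_le_norm _ _).trans (by gcongr))

theorem symplecticForm_hasDerivWithinAt {L : E × E →L[ℝ] E × E}
    (hL : IsInfinitesimallySymplectic L) {Y V : ℝ → E × E} {R : E × E} {I : Set ℝ} {s : ℝ}
    (hY : HasDerivWithinAt Y (L (Y s)) I s) (hV : HasDerivWithinAt V (L (V s) + R) I s) :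
    HasDerivWithinAt (fun s => symplecticForm (Y s) (V s)) (symplecticForm (Y s) R) I s := by
  have hYV := hL (Y s) (V s)
  have hY₁ : HasDerivWithinAt (fun s => (Y s).1) (L (Y s)).1 I s := hY.fst
  have hY₂ : HasDerivWithinAt (fun s => (Y s).2) (L (Y s)).2 I s := hY.snd
  have hV₁ : HasDerivWithinAt (fun s => (V s).1) (L (V s) + R).1 I s := hV.fst
  have hV₂ : HasDerivWithinAt (fun s => (V s).2) (L (V s) + R).2 I s := hV.snd
  refine ((hY₂.inner ℝ hV₁).sub (hY₁.inner ℝ hV₂)).congr_deriv ?_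
  simp only [symplecticForm, Prod.fst_add, Prod.snd_add, inner_add_right] at hYV ⊢
  linarith

variable [CompleteSpace E]

/- The symplectic form between the variation `Y s (0, h)` and `V s` is constant up to the
contribution of `R`, and at time `0` it reads off the position of `V`. -/
theorem norm_sub_adjoint_le_of_hasDerivWithinAt {A Y : ℝ → E × E →L[ℝ] E × E}
    {V R : ℝ → E × E} {T α β ρ₁ ρ₂ q : ℝ} (hT : 0 ≤ T) (hα : 0 ≤ α) (hβ : 0 ≤ β)
    (hA : ∀ s ∈ Set.Icc 0 T, IsInfinitesimallySymplectic (A s))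
    (hY : IsFundamentalSolution A T Y)
    (hY₁ : ∀ s ∈ Set.Icc 0 T, ∀ h, ‖(Y s (0, h)).1‖ ≤ β * ‖h‖)
    (hY₂ : ∀ s ∈ Set.Icc 0 T, ∀ h, ‖(Y s (0, h)).2‖ ≤ α * ‖h‖)
    (hV : ∀ s ∈ Set.Icc 0 T, HasDerivWithinAt V (A s (V s) + R s) (Set.Icc 0 T) s)
    (hR₁ : ∀ s ∈ Set.Icc 0 T, ‖(R s).1‖ ≤ ρ₁) (hR₂ : ∀ s ∈ Set.Icc 0 T, ‖(R s).2‖ ≤ ρ₂)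
    (hVT : ‖(V T).2‖ ≤ q) :
    ‖(V 0).1 - ContinuousLinearMap.adjoint
        ((ContinuousLinearMap.snd ℝ E E).comp ((Y T).comp (ContinuousLinearMap.inr ℝ E E)))
        (V T).1‖ ≤ β * q + T * (α * ρ₁ + β * ρ₂) := by
  have hT' : T ∈ Set.Icc 0 T := ⟨hT, le_rfl⟩
  have hρ₁ : 0 ≤ ρ₁ := (norm_nonneg _).trans (hR₁ T hT')
  have hρ₂ : 0 ≤ ρ₂ := (norm_nonneg _).trans (hR₂ T hT')
  have hq : 0 ≤ q := (norm_nonneg _).trans hVT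
  rw [← innerSL_apply_norm (𝕜 := ℝ)]
  refine ContinuousLinearMap.opNorm_le_bound _ (by positivity) fun h => ?_
  set σ : ℝ → ℝ := fun s => symplecticForm (Y s (0, h)) (V s) with hσ
  have drift : ‖σ T - σ 0‖ ≤ (α * ‖h‖ * ρ₁ + β * ‖h‖ * ρ₂) * T :=
    norm_sub_le_of_norm_deriv_le_Icc (by positivity)
      (fun s hs => symplecticForm_hasDerivWithinAt (hA s hs)
        (hY.apply_hasDerivWithinAt _ hs) (hV s hs))
      (fun s hs => norm_symplecticForm_le (hY₁ s hs h) (hY₂ s hs h) (hR₁ s hs) (hR₂ s hs)) T hT'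
  have boundary : ‖⟪(Y T (0, h)).1, (V T).2⟫‖ ≤ β * ‖h‖ * q :=
    (norm_inner_le_norm _ _).trans (by gcongr; exact hY₁ T hT' h)
  rw [innerSL_apply_apply, real_inner_comm, inner_sub_right,
    ContinuousLinearMap.adjoint_inner_right]
  calc _ = ‖(σ T - σ 0) + ⟪(Y T (0, h)).1, (V T).2⟫‖ := by
        rw [← norm_neg]
        simp only [hσ, symplecticForm, hY.initial, ContinuousLinearMap.comp_apply,
          ContinuousLinearMap.inr_apply, ContinuousLinearMap.coe_snd',
          ContinuousLinearMap.id_apply, inner_zero_left]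
        congr 1
        ring
    _ ≤ (α * ‖h‖ * ρ₁ + β * ‖h‖ * ρ₂) * T + β * ‖h‖ * q := norm_add_le_of_le drift boundary
    _ = (β * q + T * (α * ρ₁ + β * ρ₂)) * ‖h‖ := by ring

end Symplectic

section SymplecticField

variable {E : Type*} [NormedAddCommGroup E] [InnerProductSpace ℝ E]

/-- Quantitative control of a `C¹` vector field `F` on `E × E` with infinitesimally symplectic
linearization, in the region `‖w.2‖ ≤ ρ` of bounded momentum. `K` bounds everything except the
second order dependence of the force `(F ·).2` on the position, for which the larger constant
`K * M` is allowed. -/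
structure IsBoundedSymplecticField (F : E × E → E × E) (ρ K M : ℝ) : Prop where
  contDiff : ContDiff ℝ 1 F
  pos : 0 < K
  nonneg : 0 ≤ M
  isInfinitesimallySymplectic : ∀ w, IsInfinitesimallySymplectic (fderiv ℝ F w)
  norm_force_le : ∀ w, ‖w.2‖ ≤ ρ → ‖(F w).2‖ ≤ K
  norm_fderiv_le : ∀ w, ‖w.2‖ ≤ ρ → ‖fderiv ℝ F w‖ ≤ K
  norm_fst_remainder_le : ∀ w w', ‖w.2‖ ≤ ρ → ‖(F w' - F w - fderiv ℝ F w (w' - w)).1‖ ≤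
    K * (‖w'.1 - w.1‖ ^ 2 + ‖w'.1 - w.1‖ * ‖w'.2 - w.2‖)
  norm_snd_remainder_le : ∀ w w', ‖w.2‖ ≤ ρ → ‖(F w' - F w - fderiv ℝ F w (w' - w)).2‖ ≤
    K * (M * ‖w'.1 - w.1‖ ^ 2 + ‖w'.1 - w.1‖ * ‖w'.2 - w.2‖ + ‖w'.2 - w.2‖ ^ 2)

namespace IsBoundedSymplecticField

variable {F : E × E → E × E} {χ : ℝ → E × E → E × E} {ρ K M T : ℝ} {w w' : E × E}

theorem norm_sub_le (hF : IsBoundedSymplecticField F ρ K M) (hw : ‖w.2‖ ≤ ρ)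
    (hw' : ‖w'.2‖ ≤ ρ) : ‖F w' - F w‖ ≤ K * ‖w' - w‖ := by
  have convex : Convex ℝ {w : E × E | ‖w.2‖ ≤ ρ} := by
    simpa using ((convexOn_univ_norm (E := E)).comp_linearMap (LinearMap.snd ℝ E E)).convex_le ρ
  exact convex.norm_image_sub_le_of_norm_fderiv_le
    (fun w _ => (hF.contDiff.differentiable one_ne_zero) w) hF.norm_fderiv_le hw hw'

theorem norm_remainder_le (hF : IsBoundedSymplecticField F ρ K M) (hw : ‖w.2‖ ≤ ρ) :
    ‖F w' - F w - fderiv ℝ F w (w' - w)‖ ≤ K * (M + 2) * ‖w' - w‖ ^ 2 := by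
  have hK := hF.pos.le
  have hM := hF.nonneg
  have hu : ‖w'.1 - w.1‖ ≤ ‖w' - w‖ := norm_fst_le (w' - w)
  have hq : ‖w'.2 - w.2‖ ≤ ‖w' - w‖ := norm_snd_le (w' - w)
  refine norm_prod_le_iff.2 ⟨(hF.norm_fst_remainder_le w w' hw).trans ?_,
    (hF.norm_snd_remainder_le w w' hw).trans ?_⟩
  · calc K * (‖w'.1 - w.1‖ ^ 2 + ‖w'.1 - w.1‖ * ‖w'.2 - w.2‖)
        ≤ K * (‖w' - w‖ ^ 2 + ‖w' - w‖ * ‖w' - w‖) := by gcongr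
      _ = K * (0 + 2) * ‖w' - w‖ ^ 2 := by ring
      _ ≤ K * (M + 2) * ‖w' - w‖ ^ 2 := by gcongr
  · calc K * (M * ‖w'.1 - w.1‖ ^ 2 + ‖w'.1 - w.1‖ * ‖w'.2 - w.2‖ + ‖w'.2 - w.2‖ ^ 2)
        ≤ K * (M * ‖w' - w‖ ^ 2 + ‖w' - w‖ * ‖w' - w‖ + ‖w' - w‖ ^ 2) := by gcongr
      _ = K * (M + 2) * ‖w' - w‖ ^ 2 := by ring

theorem norm_snd_flow_le (hF : IsBoundedSymplecticField F ρ K M) (hχ : IsFlow F χ)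
    (hKT : K * T ≤ 1 / 2) (hw : ‖w.2‖ + 1 ≤ ρ) : ∀ s ∈ Set.Icc 0 T, ‖(χ s w).2‖ ≤ ρ := by
  have hK := hF.pos
  have hderiv (s : ℝ) : HasDerivAt (fun s => (χ s w).2) (F (χ s w)).2 s := (hχ.2 w s).snd
  have barrier_le : ∀ s ∈ Set.Icc 0 T, ‖w.2‖ + 2 * K * s ≤ ρ := fun s hs => by
    have := mul_le_mul_of_nonneg_left hs.2 hK.le
    linarith
  have norm_le_barrier : ∀ s ∈ Set.Icc 0 T, ‖(χ s w).2‖ ≤ ‖w.2‖ + 2 * K * s :=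
    image_norm_le_of_norm_deriv_right_lt_deriv_boundary' (f' := fun s => (F (χ s w)).2)
      (B' := fun _ => 2 * K)
      (fun s _ => (hderiv s).continuousAt.continuousWithinAt)
      (fun s _ => (hderiv s).hasDerivWithinAt) (by simp [hχ.1]) (by fun_prop)
      (fun s _ => by simpa using
        ((hasDerivAt_id s).const_mul (2 * K)).const_add ‖w.2‖ |>.hasDerivWithinAt)
      fun s hs hsw => by
        have := hF.norm_force_le (χ s w) (hsw.trans_le (barrier_le s ⟨hs.1, hs.2.le⟩))
        linarith
  exact fun s hs => (norm_le_barrier s hs).trans (barrier_le s hs)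

theorem norm_flow_sub_le (hF : IsBoundedSymplecticField F ρ K M) (hχ : IsFlow F χ)
    (hKT : K * T ≤ 1 / 2) (hw : ‖w.2‖ + 1 ≤ ρ) (hw' : ‖w'.2‖ + 1 ≤ ρ) :
    ∀ s ∈ Set.Icc 0 T, ‖χ s w' - χ s w‖ ≤ 2 * ‖w' - w‖ :=
  hχ.norm_sub_le (S := {w : E × E | ‖w.2‖ ≤ ρ}) hF.pos.le hKT
    (fun _ hw _ hw' => hF.norm_sub_le hw hw')
    (hF.norm_snd_flow_le hχ hKT hw) (hF.norm_snd_flow_le hχ hKT hw')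

theorem norm_fst_flow_sub_le (hF : IsBoundedSymplecticField F ρ K M) (hχ : IsFlow F χ)
    (hKT : K * T ≤ 1 / 2) (hw : ‖w.2‖ + 1 ≤ ρ) (hw' : ‖w'.2‖ + 1 ≤ ρ) {s : ℝ}
    (hs : s ∈ Set.Icc 0 T) :
    ‖(χ s w').1 - (χ s w).1‖ ≤ ‖w'.1 - w.1‖ + K * (2 * ‖w' - w‖) * T := by
  have hK := hF.pos.le
  have displacement : ‖χ s w' - χ s w - (w' - w)‖ ≤ K * (2 * ‖w' - w‖) * T := by
    simpa only [hχ.1] using norm_sub_le_of_norm_deriv_le_Icc (by positivity)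
      (fun s _ => hχ.sub_hasDerivWithinAt w w' _ s)
      (fun s hs => (hF.norm_sub_le (hF.norm_snd_flow_le hχ hKT hw s hs)
        (hF.norm_snd_flow_le hχ hKT hw' s hs)).trans
          (by gcongr; exact hF.norm_flow_sub_le hχ hKT hw hw' s hs)) s hs
  calc ‖(χ s w').1 - (χ s w).1‖
      = ‖(w'.1 - w.1) + (χ s w' - χ s w - (w' - w)).1‖ := by simp
    _ ≤ ‖w'.1 - w.1‖ + K * (2 * ‖w' - w‖) * T :=
        norm_add_le_of_le le_rfl ((norm_fst_le _).trans displacement)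

section Linearization

variable {Y : ℝ → E × E →L[ℝ] E × E}

theorem hasFDerivAt_flow (hF : IsBoundedSymplecticField F ρ K M) (hχ : IsFlow F χ)
    (hKT : K * T ≤ 1 / 2) (hw : ‖w.2‖ + 1 < ρ)
    (hY : IsFundamentalSolution (fun s => fderiv ℝ F (χ s w)) T Y) {s : ℝ}
    (hs : s ∈ Set.Icc 0 T) : HasFDerivAt (χ s) (Y s) w := by
  have eventually_lt : ∀ᶠ w' in nhds w, ‖w'.2‖ + 1 < ρ :=
    ContinuousAt.eventually_lt (by fun_prop) continuousAt_const hw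
  have := hF.nonneg
  have := hF.pos
  exact hχ.hasFDerivAt (S := {w : E × E | ‖w.2‖ ≤ ρ}) (C := K * (M + 2)) hF.pos.le
    (by positivity) hKT hF.norm_fderiv_le (fun _ hw _ hw' => hF.norm_sub_le hw hw')
    (fun _ hw _ _ => hF.norm_remainder_le hw)
    (eventually_lt.mono fun _ hw' => hF.norm_snd_flow_le hχ hKT hw'.le) hY hs

theorem fderiv_snd_flow (hF : IsBoundedSymplecticField F ρ K M) (hχ : IsFlow F χ)
    (hKT : K * T ≤ 1 / 2) {z ζ : E} (hζ : ‖ζ‖ + 1 < ρ)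
    (hY : IsFundamentalSolution (fun s => fderiv ℝ F (χ s (z, ζ))) T Y) {s : ℝ}
    (hs : s ∈ Set.Icc 0 T) :
    fderiv ℝ (fun ζ' => (χ s (z, ζ')).2) ζ =
      (ContinuousLinearMap.snd ℝ E E).comp ((Y s).comp (ContinuousLinearMap.inr ℝ E E)) :=
  ((hF.hasFDerivAt_flow hχ hKT hζ hY hs).comp ζ (hasFDerivAt_prodMk_right z ζ)).snd.fderiv

theorem norm_linearization_le (hF : IsBoundedSymplecticField F ρ K M) (hχ : IsFlow F χ)
    (hKT : K * T ≤ 1 / 2) (hw : ‖w.2‖ + 1 ≤ ρ)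
    (hY : IsFundamentalSolution (fun s => fderiv ℝ F (χ s w)) T Y) (v : E × E) {s : ℝ}
    (hs : s ∈ Set.Icc 0 T) : ‖Y s v‖ ≤ 2 * ‖v‖ :=
  hY.norm_apply_le hF.pos.le hKT
    (fun s hs => hF.norm_fderiv_le _ (hF.norm_snd_flow_le hχ hKT hw s hs)) v hs

theorem norm_fst_linearization_le (hF : IsBoundedSymplecticField F ρ K M) (hχ : IsFlow F χ)
    (hKT : K * T ≤ 1 / 2) (hw : ‖w.2‖ + 1 ≤ ρ)
    (hY : IsFundamentalSolution (fun s => fderiv ℝ F (χ s w)) T Y) (h : E) {s : ℝ}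
    (hs : s ∈ Set.Icc 0 T) : ‖(Y s (0, h)).1‖ ≤ 2 * K * T * ‖h‖ := by
  have hK := hF.pos.le
  have displacement : ‖Y s (0, h) - (0, h)‖ ≤ K * (2 * ‖h‖) * T := by
    simpa [hY.initial] using norm_sub_le_of_norm_deriv_le_Icc (C := K * (2 * ‖((0 : E), h)‖))
      (by positivity) (fun _ => hY.apply_hasDerivWithinAt (0, h))
      (fun s hs => ((fderiv ℝ F (χ s w)).le_of_opNorm_le
          (hF.norm_fderiv_le _ (hF.norm_snd_flow_le hχ hKT hw s hs)) _).trans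
        (by gcongr; exact hF.norm_linearization_le hχ hKT hw hY (0, h) hs)) s hs
  calc ‖(Y s (0, h)).1‖ = ‖(Y s (0, h) - (0, h)).1‖ := by simp
    _ ≤ K * (2 * ‖h‖) * T := (norm_fst_le _).trans displacement
    _ = 2 * K * T * ‖h‖ := by ring

variable [CompleteSpace E]

theorem exists_linearization (hF : IsBoundedSymplecticField F ρ K M) (hχ : IsFlow F χ)
    (hT : 0 ≤ T) (hKT : K * T ≤ 1 / 2) (hw : ‖w.2‖ + 1 ≤ ρ) :
    ∃ Y, IsFundamentalSolution (fun s => fderiv ℝ F (χ s w)) T Y :=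
  IsFundamentalSolution.exists_of_norm_le ((hF.contDiff.continuous_fderiv one_ne_zero).comp
      (hχ.continuous_trajectory w)).continuousOn hT hF.pos.le hKT
    fun s hs => hF.norm_fderiv_le _ (hF.norm_snd_flow_le hχ hKT hw s hs)

theorem norm_sub_adjoint_fderiv_snd_flow_le (hF : IsBoundedSymplecticField F ρ K M)
    (hχ : IsFlow F χ) (hT : 0 ≤ T) (hKT : K * T ≤ 1 / 2) {x z ξ ζ : E} (hξ : ‖ξ‖ + 1 < ρ)
    (hζ : ‖ζ‖ + 1 < ρ) {Q U : ℝ} (hQ : 2 * ‖(x, ξ) - (z, ζ)‖ ≤ Q)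
    (hU : ‖x - z‖ + K * Q * T ≤ U) :
    ‖(x - z) - ContinuousLinearMap.adjoint (fderiv ℝ (fun ζ' => (χ T (z, ζ')).2) ζ)
        ((χ T (x, ξ)).1 - (χ T (z, ζ)).1)‖ ≤
      2 * K * T * Q +
        T * (2 * (K * (U ^ 2 + U * Q)) + 2 * K * T * (K * (M * U ^ 2 + U * Q + Q ^ 2))) := by
  have hK := hF.pos.le
  have hM := hF.nonneg
  obtain ⟨Y, hY⟩ := hF.exists_linearization hχ hT hKT (w := (z, ζ)) hζ.le
  have norm_momentum_le := hF.norm_snd_flow_le hχ hKT (w := (z, ζ)) hζ.le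
  have norm_sub_le_Q : ∀ s ∈ Set.Icc 0 T, ‖χ s (x, ξ) - χ s (z, ζ)‖ ≤ Q :=
    fun s hs => (hF.norm_flow_sub_le hχ hKT hζ.le hξ.le s hs).trans hQ
  have norm_snd_sub_le : ∀ s ∈ Set.Icc 0 T, ‖(χ s (x, ξ)).2 - (χ s (z, ζ)).2‖ ≤ Q :=
    fun s hs => (norm_snd_le (χ s (x, ξ) - χ s (z, ζ))).trans (norm_sub_le_Q s hs)
  have norm_fst_sub_le : ∀ s ∈ Set.Icc 0 T, ‖(χ s (x, ξ)).1 - (χ s (z, ζ)).1‖ ≤ U :=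
    fun s hs => (hF.norm_fst_flow_sub_le hχ hKT hζ.le hξ.le hs).trans
      (hU.trans' (by dsimp only; gcongr))
  have hT' : T ∈ Set.Icc 0 T := ⟨hT, le_rfl⟩
  have : 0 ≤ Q := (norm_nonneg _).trans (norm_sub_le_Q T hT')
  have hU₀ : 0 ≤ U := (norm_nonneg _).trans (norm_fst_sub_le T hT')
  rw [hF.fderiv_snd_flow hχ hKT hζ hY hT']
  have symplectic_estimate := norm_sub_adjoint_le_of_hasDerivWithinAt (α := 2) (β := 2 * K * T)
    (ρ₁ := K * (U ^ 2 + U * Q)) (ρ₂ := K * (M * U ^ 2 + U * Q + Q ^ 2))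
    (V := fun s => χ s (x, ξ) - χ s (z, ζ)) hT two_pos.le (by positivity)
    (fun s _ => hF.isInfinitesimallySymplectic (χ s (z, ζ))) hY
    (fun s hs h => hF.norm_fst_linearization_le hχ hKT hζ.le hY h hs)
    (fun s hs h => (norm_snd_le _).trans
      (by simpa using hF.norm_linearization_le hχ hKT hζ.le hY (0, h) hs))
    (fun s _ => (hχ.sub_hasDerivWithinAt (z, ζ) (x, ξ) _ s).congr_deriv (add_sub_cancel _ _).symm)
    (fun s hs => (hF.norm_fst_remainder_le _ _ (norm_momentum_le s hs)).trans
      (by gcongr <;> solve_by_elim))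
    (fun s hs => (hF.norm_snd_remainder_le _ _ (norm_momentum_le s hs)).trans
      (by gcongr <;> solve_by_elim))
    (norm_snd_sub_le T hT')
  simpa only [hχ.1, Prod.fst_sub] using symplectic_estimate

end Linearization

end IsBoundedSymplecticField

end SymplecticField

section Taylor

variable {X Y : Type*} [NormedAddCommGroup X] [NormedSpace ℝ X] [NormedAddCommGroup Y]
  [NormedSpace ℝ Y] {f : X → Y} {C : ℝ}

theorem norm_image_sub_le_of_norm_iteratedFDeriv_one_le (hf : Differentiable ℝ f)
    (hC : ∀ x, ‖iteratedFDeriv ℝ 1 f x‖ ≤ C) (x y : X) : ‖f y - f x‖ ≤ C * ‖y - x‖ :=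
  convex_univ.norm_image_sub_le_of_norm_fderiv_le (fun x _ => hf x)
    (fun x _ => by simpa only [norm_iteratedFDeriv_one] using hC x) trivial trivial

theorem norm_image_sub_sub_fderiv_le_of_norm_iteratedFDeriv_two_le (hf : ContDiff ℝ 2 f)
    (hC : ∀ x, ‖iteratedFDeriv ℝ 2 f x‖ ≤ C) (x y : X) :
    ‖f y - f x - fderiv ℝ f x (y - x)‖ ≤ C * ‖y - x‖ ^ 2 := by
  have hC₀ : 0 ≤ C := (norm_nonneg _).trans (hC x)
  have fderiv_sub_le : ∀ y' ∈ segment ℝ x y, ‖fderiv ℝ f y' - fderiv ℝ f x‖ ≤ C * ‖y - x‖ :=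
    fun y' hy' => calc
      ‖fderiv ℝ f y' - fderiv ℝ f x‖ ≤ C * ‖y' - x‖ :=
        norm_image_sub_le_of_norm_iteratedFDeriv_one_le
          ((hf.fderiv_right (m := 1) le_rfl).differentiable one_ne_zero)
          (fun x => by simpa only [norm_iteratedFDeriv_fderiv] using hC x) x y'
      _ ≤ C * ‖y - x‖ := by gcongr; exact norm_sub_le_of_mem_segment hy'
  calc ‖f y - f x - fderiv ℝ f x (y - x)‖ ≤ C * ‖y - x‖ * ‖y - x‖ :=
        (convex_segment x y).norm_image_sub_le_of_norm_fderiv_le'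
          (fun x _ => hf.differentiable two_ne_zero x) fderiv_sub_le
          (left_mem_segment ℝ x y) (right_mem_segment ℝ x y)
    _ = C * ‖y - x‖ ^ 2 := by ring

end Taylor

section HomogeneousField

set_option maxSynthPendingDepth 5

variable {E : Type*} [NormedAddCommGroup E] [NormedSpace ℝ E]

/-- The vector field on phase space `E × E` whose velocity `N z η` is linear and whose force
`P z η η` is quadratic in the momentum `η`. -/
def homogeneousField (N : E → E →L[ℝ] E) (P : E → E →L[ℝ] E →L[ℝ] E) (w : E × E) : E × E :=
  (N w.1 w.2, P w.1 w.2 w.2)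

/-- Derivative bounds on the coefficients of `homogeneousField N P`: all of them are controlled
by `A` except the second derivative of `P`, which is controlled by `A * M`. -/
structure IsBoundedCoefficients (N : E → E →L[ℝ] E) (P : E → E →L[ℝ] E →L[ℝ] E) (A M : ℝ) :
    Prop where
  contDiff_velocity : ContDiff ℝ 2 N
  contDiff_force : ContDiff ℝ 2 P
  norm_velocity_le : ∀ k ≤ 2, ∀ z, ‖iteratedFDeriv ℝ k N z‖ ≤ A
  norm_force_le : ∀ k ≤ 1, ∀ z, ‖iteratedFDeriv ℝ k P z‖ ≤ A
  norm_force_two_le : ∀ z, ‖iteratedFDeriv ℝ 2 P z‖ ≤ A * M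

variable {N : E → E →L[ℝ] E} {P : E → E →L[ℝ] E →L[ℝ] E} {A M ρ : ℝ} {w w' : E × E}

theorem contDiff_homogeneousField {k : WithTop ℕ∞} (hN : ContDiff ℝ k N) (hP : ContDiff ℝ k P) :
    ContDiff ℝ k (homogeneousField N P) :=
  ((hN.comp contDiff_fst).clm_apply contDiff_snd).prodMk
    (((hP.comp contDiff_fst).clm_apply contDiff_snd).clm_apply contDiff_snd)

theorem fderiv_homogeneousField_apply (hN : DifferentiableAt ℝ N w.1)
    (hP : DifferentiableAt ℝ P w.1) (v : E × E) :
    fderiv ℝ (homogeneousField N P) w v =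
      (fderiv ℝ N w.1 v.1 w.2 + N w.1 v.2,
        fderiv ℝ P w.1 v.1 w.2 w.2 + P w.1 v.2 w.2 + P w.1 w.2 v.2) := by
  have hfst : HasFDerivAt Prod.fst (ContinuousLinearMap.fst ℝ E E) w := hasFDerivAt_fst
  have hsnd : HasFDerivAt Prod.snd (ContinuousLinearMap.snd ℝ E E) w := hasFDerivAt_snd
  have hN' := hN.hasFDerivAt.comp w hfst
  have hP' := hP.hasFDerivAt.comp w hfst
  have hF : HasFDerivAt (homogeneousField N P) _ w :=
    (hN'.clm_apply hsnd).prodMk ((hP'.clm_apply hsnd).clm_apply hsnd)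
  rw [hF.fderiv]
  ext <;> simp <;> abel

theorem homogeneousField_remainder (hN : DifferentiableAt ℝ N w.1)
    (hP : DifferentiableAt ℝ P w.1) :
    homogeneousField N P w' - homogeneousField N P w -
        fderiv ℝ (homogeneousField N P) w (w' - w) =
      ((N w'.1 - N w.1 - fderiv ℝ N w.1 (w'.1 - w.1)) w.2 + (N w'.1 - N w.1) (w'.2 - w.2),
        (P w'.1 - P w.1 - fderiv ℝ P w.1 (w'.1 - w.1)) w.2 w.2 +
          (P w'.1 - P w.1) (w'.2 - w.2) w.2 + (P w'.1 - P w.1) w.2 (w'.2 - w.2) +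
          P w'.1 (w'.2 - w.2) (w'.2 - w.2)) := by
  rw [fderiv_homogeneousField_apply hN hP]
  simp only [homogeneousField, Prod.mk_sub_mk, Prod.fst_sub, Prod.snd_sub, map_sub, sub_apply,
    Prod.mk.injEq]
  constructor <;> abel

namespace IsBoundedCoefficients

theorem norm_fderiv_homogeneousField_le (h : IsBoundedCoefficients N P A M) (hw : ‖w.2‖ ≤ ρ) :
    ‖fderiv ℝ (homogeneousField N P) w‖ ≤ A * (ρ + 1) ^ 2 := by
  have hA : 0 ≤ A := (norm_nonneg _).trans (h.norm_velocity_le 0 zero_le_two w.1)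
  have hρ : 0 ≤ ρ := (norm_nonneg _).trans hw
  have hN : ‖N w.1‖ ≤ A := by simpa using h.norm_velocity_le 0 zero_le_two w.1
  have hN₁ : ‖fderiv ℝ N w.1‖ ≤ A := by simpa using h.norm_velocity_le 1 one_le_two w.1
  have hP : ‖P w.1‖ ≤ A := by simpa using h.norm_force_le 0 zero_le_one w.1
  have hP₁ : ‖fderiv ℝ P w.1‖ ≤ A := by simpa using h.norm_force_le 1 le_rfl w.1
  refine ContinuousLinearMap.opNorm_le_bound _ (by positivity) fun v => ?_
  have hv₁ : ‖v.1‖ ≤ ‖v‖ := norm_fst_le v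
  have hv₂ : ‖v.2‖ ≤ ‖v‖ := norm_snd_le v
  rw [fderiv_homogeneousField_apply (h.contDiff_velocity.differentiable two_ne_zero _)
    (h.contDiff_force.differentiable two_ne_zero _)]
  refine norm_prod_le_iff.2 ⟨?_, ?_⟩
  · calc ‖fderiv ℝ N w.1 v.1 w.2 + N w.1 v.2‖ ≤ A * ‖v‖ * ρ + A * ‖v‖ :=
          norm_add_le_of_le (ContinuousLinearMap.le_of_opNorm₂_le_of_le _ hN₁ hv₁ hw)
            (ContinuousLinearMap.le_of_opNorm_le_of_le _ hN hv₂)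
      _ ≤ A * (ρ + 1) ^ 2 * ‖v‖ := by
          nlinarith [mul_nonneg (mul_nonneg hA (norm_nonneg v)) hρ]
  · calc ‖fderiv ℝ P w.1 v.1 w.2 w.2 + P w.1 v.2 w.2 + P w.1 w.2 v.2‖
        ≤ A * ‖v‖ * ρ * ρ + A * ‖v‖ * ρ + A * ρ * ‖v‖ :=
          norm_add_le_of_le (norm_add_le_of_le
              (ContinuousLinearMap.le_of_opNorm_le_of_le _
                (ContinuousLinearMap.le_of_opNorm₂_le_of_le _ hP₁ hv₁ hw) hw)
              (ContinuousLinearMap.le_of_opNorm₂_le_of_le _ hP hv₂ hw))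
            (ContinuousLinearMap.le_of_opNorm₂_le_of_le _ hP hw hv₂)
      _ ≤ A * (ρ + 1) ^ 2 * ‖v‖ := by nlinarith [mul_nonneg hA (norm_nonneg v)]

theorem norm_snd_homogeneousField_le (h : IsBoundedCoefficients N P A M) (hw : ‖w.2‖ ≤ ρ) :
    ‖(homogeneousField N P w).2‖ ≤ A * ρ ^ 2 := by
  have hP : ‖P w.1‖ ≤ A := by simpa using h.norm_force_le 0 zero_le_one w.1
  calc ‖P w.1 w.2 w.2‖ ≤ A * ρ * ρ := ContinuousLinearMap.le_of_opNorm₂_le_of_le _ hP hw hw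
    _ = A * ρ ^ 2 := by ring

theorem norm_fst_remainder_le (h : IsBoundedCoefficients N P A M) (hw : ‖w.2‖ ≤ ρ) :
    ‖(homogeneousField N P w' - homogeneousField N P w -
        fderiv ℝ (homogeneousField N P) w (w' - w)).1‖ ≤
      A * ‖w'.1 - w.1‖ ^ 2 * ρ + A * ‖w'.1 - w.1‖ * ‖w'.2 - w.2‖ := by
  have hN := h.contDiff_velocity.differentiable two_ne_zero
  have taylor := norm_image_sub_sub_fderiv_le_of_norm_iteratedFDeriv_two_le h.contDiff_velocity
    (h.norm_velocity_le 2 le_rfl) w.1 w'.1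
  have lipschitz := norm_image_sub_le_of_norm_iteratedFDeriv_one_le hN
    (h.norm_velocity_le 1 one_le_two) w.1 w'.1
  rw [homogeneousField_remainder (hN _) (h.contDiff_force.differentiable two_ne_zero _)]
  exact norm_add_le_of_le (ContinuousLinearMap.le_of_opNorm_le_of_le _ taylor hw)
    (ContinuousLinearMap.le_of_opNorm_le _ lipschitz _)

theorem norm_snd_remainder_le (h : IsBoundedCoefficients N P A M) (hw : ‖w.2‖ ≤ ρ) :
    ‖(homogeneousField N P w' - homogeneousField N P w -
        fderiv ℝ (homogeneousField N P) w (w' - w)).2‖ ≤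
      A * M * ‖w'.1 - w.1‖ ^ 2 * ρ * ρ + A * ‖w'.1 - w.1‖ * ‖w'.2 - w.2‖ * ρ +
        A * ‖w'.1 - w.1‖ * ρ * ‖w'.2 - w.2‖ + A * ‖w'.2 - w.2‖ * ‖w'.2 - w.2‖ := by
  have hP := h.contDiff_force.differentiable two_ne_zero
  have bound : ‖P w'.1‖ ≤ A := by simpa using h.norm_force_le 0 zero_le_one w'.1
  have lipschitz := norm_image_sub_le_of_norm_iteratedFDeriv_one_le hP
    (h.norm_force_le 1 le_rfl) w.1 w'.1
  have taylor := norm_image_sub_sub_fderiv_le_of_norm_iteratedFDeriv_two_le h.contDiff_force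
    h.norm_force_two_le w.1 w'.1
  rw [homogeneousField_remainder (h.contDiff_velocity.differentiable two_ne_zero _) (hP _)]
  exact norm_add_le_of_le (norm_add_le_of_le (norm_add_le_of_le
    (ContinuousLinearMap.le_of_opNorm₂_le_of_le _ taylor hw hw)
    (ContinuousLinearMap.le_of_opNorm₂_le_of_le _ lipschitz le_rfl hw))
    (ContinuousLinearMap.le_of_opNorm₂_le_of_le _ lipschitz hw le_rfl))
    (ContinuousLinearMap.le_of_opNorm₂_le_of_le _ bound le_rfl le_rfl)

theorem isBoundedSymplecticField {E : Type*} [NormedAddCommGroup E] [InnerProductSpace ℝ E]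
    {N : E → E →L[ℝ] E} {P : E → E →L[ℝ] E →L[ℝ] E} (h : IsBoundedCoefficients N P A M)
    (hA : 0 < A) (hM : 0 ≤ M) (hρ : 0 ≤ ρ)
    (hNP : ∀ w, IsInfinitesimallySymplectic (fderiv ℝ (homogeneousField N P) w)) :
    IsBoundedSymplecticField (homogeneousField N P) ρ (A * (ρ + 1) ^ 2) M where
  contDiff := (contDiff_homogeneousField h.contDiff_velocity h.contDiff_force).of_le one_le_two
  pos := by positivity
  nonneg := hM
  isInfinitesimallySymplectic := hNP
  norm_force_le w hw := (h.norm_snd_homogeneousField_le hw).trans (by gcongr; linarith)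
  norm_fderiv_le w hw := h.norm_fderiv_homogeneousField_le hw
  norm_fst_remainder_le w w' hw := (h.norm_fst_remainder_le hw).trans <| sub_nonneg.1 <| by
    ring_nf
    positivity
  norm_snd_remainder_le w w' hw := (h.norm_snd_remainder_le hw).trans <| sub_nonneg.1 <| by
    ring_nf
    positivity

end IsBoundedCoefficients

end HomogeneousField

section QuadraticHamiltonian

set_option maxSynthPendingDepth 5

variable {E : Type*} [NormedAddCommGroup E] [InnerProductSpace ℝ E] [CompleteSpace E]

/-- The Riesz isomorphism, taking the differential of a function to its gradient. -/
def sharp : (E →L[ℝ] ℝ) ≃ₗᵢ[ℝ] E := (InnerProductSpace.toDual ℝ E).symm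

/-- The linear map `T ↦ (η ↦ ∇ (η ↦ T η η))` on bilinear forms. -/
def velocityMap : (E →L[ℝ] E →L[ℝ] ℝ) →L[ℝ] E →L[ℝ] E :=
  (ContinuousLinearMap.compL ℝ E (E →L[ℝ] ℝ) E
    sharp.toContinuousLinearEquiv.toContinuousLinearMap).comp
    (ContinuousLinearMap.id ℝ _ +
      (ContinuousLinearMap.flipₗᵢ ℝ E E ℝ : (E →L[ℝ] E →L[ℝ] ℝ) →L[ℝ] E →L[ℝ] E →L[ℝ] ℝ))

/-- The linear map taking the differential `G = dB` of a family of bilinear forms to the bilinear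
map whose diagonal `η ↦ forceMap G η η` is the force `-∇_z (B z η η)`. -/
def forceMap : (E →L[ℝ] E →L[ℝ] E →L[ℝ] ℝ) →L[ℝ] E →L[ℝ] E →L[ℝ] E :=
  -(ContinuousLinearMap.compL ℝ E (E →L[ℝ] E →L[ℝ] ℝ) (E →L[ℝ] E)
    ((ContinuousLinearMap.compL ℝ E (E →L[ℝ] ℝ) E
        sharp.toContinuousLinearEquiv.toContinuousLinearMap).comp
      (ContinuousLinearMap.flipₗᵢ ℝ E E ℝ : (E →L[ℝ] E →L[ℝ] ℝ) →L[ℝ] E →L[ℝ] E →L[ℝ] ℝ))).comp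
    (ContinuousLinearMap.flipₗᵢ ℝ E E (E →L[ℝ] ℝ) :
      (E →L[ℝ] E →L[ℝ] E →L[ℝ] ℝ) →L[ℝ] E →L[ℝ] E →L[ℝ] E →L[ℝ] ℝ)

theorem inner_sharp (φ : E →L[ℝ] ℝ) (v : E) : ⟪sharp φ, v⟫ = φ v :=
  InnerProductSpace.toDual_symm_apply

theorem velocityMap_apply (T : E →L[ℝ] E →L[ℝ] ℝ) (η : E) :
    velocityMap T η = sharp (T η + T.flip η) := rfl

theorem forceMap_apply (G : E →L[ℝ] E →L[ℝ] E →L[ℝ] ℝ) (η η' : E) :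
    forceMap G η η' = -sharp ((G.flip η).flip η') := rfl

theorem norm_velocityMap_le : ‖(velocityMap : _ →L[ℝ] E →L[ℝ] E)‖ ≤ 2 := by
  refine ContinuousLinearMap.opNorm_le_bound₂ _ zero_le_two fun T η => ?_
  rw [velocityMap_apply, LinearIsometryEquiv.norm_map]
  calc ‖T η + T.flip η‖ ≤ ‖T‖ * ‖η‖ + ‖T‖ * ‖η‖ :=
        norm_add_le_of_le (T.le_opNorm η) (T.flip.le_of_opNorm_le T.opNorm_flip.le η)
    _ = 2 * ‖T‖ * ‖η‖ := by ring

theorem norm_forceMap_le : ‖(forceMap : _ →L[ℝ] E →L[ℝ] E →L[ℝ] E)‖ ≤ 1 := by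
  refine ContinuousLinearMap.opNorm_le_bound _ zero_le_one fun G => ?_
  refine ContinuousLinearMap.opNorm_le_bound₂ _ (by positivity) fun η η' => ?_
  rw [forceMap_apply, norm_neg, LinearIsometryEquiv.norm_map, one_mul]
  exact (G.flip η).flip.le_of_opNorm_le
    ((G.flip η).opNorm_flip.trans_le (G.flip.le_of_opNorm_le G.opNorm_flip.le η)) η'

variable {B : E → E →L[ℝ] E →L[ℝ] ℝ}

/-- The Hamiltonian vector field of `(z, η) ↦ B z η η`. -/
def quadraticField (B : E → E →L[ℝ] E →L[ℝ] ℝ) : E × E → E × E :=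
  homogeneousField (velocityMap ∘ B) (forceMap ∘ fderiv ℝ B)

theorem quadraticField_apply {w : E × E} (hB : DifferentiableAt ℝ B w.1) :
    quadraticField B w =
      (gradient (fun η => B w.1 η η) w.2, -gradient (fun z => B z w.2 w.2) w.1) := by
  have fderiv_velocity : fderiv ℝ (fun η => B w.1 η η) w.2 = B w.1 w.2 + (B w.1).flip w.2 := by
    refine ((B w.1).hasFDerivAt.clm_apply (hasFDerivAt_id w.2)).fderiv.trans ?_
    ext v
    simp
  have fderiv_force : fderiv ℝ (fun z => B z w.2 w.2) w.1 =
      ((fderiv ℝ B w.1).flip w.2).flip w.2 := by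
    rw [((hB.hasFDerivAt.clm_apply (hasFDerivAt_const w.2 w.1)).clm_apply
      (hasFDerivAt_const w.2 w.1)).fderiv]
    ext v
    simp
  rw [gradient, gradient, fderiv_velocity, fderiv_force]
  rfl

theorem isInfinitesimallySymplectic_fderiv_quadraticField (hB : ContDiff ℝ 2 B) (w : E × E) :
    IsInfinitesimallySymplectic (fderiv ℝ (quadraticField B) w) := by
  intro Y V
  have hB₁ := hB.differentiable two_ne_zero
  have hB₂ := (hB.fderiv_right (m := 1) le_rfl).differentiable one_ne_zero
  have fderiv_velocity : ∀ v, fderiv ℝ (velocityMap ∘ B) w.1 v = velocityMap (fderiv ℝ B w.1 v) :=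
    fun v => by rw [(velocityMap.hasFDerivAt.comp w.1 (hB₁ w.1).hasFDerivAt).fderiv]; rfl
  have fderiv_force : ∀ v, fderiv ℝ (forceMap ∘ fderiv ℝ B) w.1 v =
      forceMap (fderiv ℝ (fderiv ℝ B) w.1 v) :=
    fun v => by rw [(forceMap.hasFDerivAt.comp w.1 (hB₂ w.1).hasFDerivAt).fderiv]; rfl
  have symm : fderiv ℝ (fderiv ℝ B) w.1 Y.1 V.1 = fderiv ℝ (fderiv ℝ B) w.1 V.1 Y.1 :=
    (hB.contDiffAt.isSymmSndFDerivAt (by simp)) Y.1 V.1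
  simp only [quadraticField]
  rw [fderiv_homogeneousField_apply (velocityMap.differentiableAt.comp _ (hB₁ _))
    (forceMap.differentiableAt.comp _ (hB₂ _)),
    fderiv_homogeneousField_apply (velocityMap.differentiableAt.comp _ (hB₁ _))
    (forceMap.differentiableAt.comp _ (hB₂ _))]
  simp only [symplecticForm, fderiv_velocity, fderiv_force, Function.comp_apply,
    velocityMap_apply, forceMap_apply, inner_add_left, inner_add_right, inner_neg_left,
    inner_neg_right, inner_sharp, real_inner_comm (sharp _), ContinuousLinearMap.flip_apply,
    add_apply, symm]
  ring

theorem norm_iteratedFDeriv_velocityMap_comp_le {k : ℕ} (hB : ContDiff ℝ k B) (z : E) :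
    ‖iteratedFDeriv ℝ k (velocityMap ∘ B) z‖ ≤ 2 * ‖iteratedFDeriv ℝ k B z‖ := by
  have norm_comp_le := (velocityMap (E := E)).norm_iteratedFDeriv_comp_left
    (hB.contDiffAt (x := z)) le_rfl
  refine norm_comp_le.trans ?_
  gcongr
  exact norm_velocityMap_le

theorem norm_iteratedFDeriv_forceMap_comp_fderiv_le {k : ℕ} (hB : ContDiff ℝ (k + 1) B) (z : E) :
    ‖iteratedFDeriv ℝ k (forceMap ∘ fderiv ℝ B) z‖ ≤ ‖iteratedFDeriv ℝ (k + 1) B z‖ := by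
  have hdB : ContDiff ℝ k (fderiv ℝ B) := hB.fderiv_right le_rfl
  have norm_comp_le := (forceMap (E := E)).norm_iteratedFDeriv_comp_left
    (hdB.contDiffAt (x := z)) le_rfl
  rw [← norm_iteratedFDeriv_fderiv]
  exact norm_comp_le.trans (mul_le_of_le_one_left (norm_nonneg _) norm_forceMap_le)

theorem isBoundedCoefficients_of_norm_iteratedFDeriv_le {A M : ℝ} (hB : ContDiff ℝ 3 B)
    (hA : ∀ k ≤ 2, ∀ z, ‖iteratedFDeriv ℝ k B z‖ ≤ A)
    (hM : ∀ z, ‖iteratedFDeriv ℝ 3 B z‖ ≤ A * M) :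
    IsBoundedCoefficients (velocityMap ∘ B) (forceMap ∘ fderiv ℝ B) (2 * A) M where
  contDiff_velocity := velocityMap.contDiff.comp (hB.of_le (by norm_num))
  contDiff_force := forceMap.contDiff.comp (hB.fderiv_right le_rfl)
  norm_velocity_le k hk z := by
    have hBk : ContDiff ℝ k B := hB.of_le (mod_cast hk.trans (by lia))
    linarith [norm_iteratedFDeriv_velocityMap_comp_le hBk z, hA k hk z]
  norm_force_le k hk z := by
    have hBk : ContDiff ℝ (k + 1) B := hB.of_le (mod_cast (by lia : k + 1 ≤ 3))
    linarith [norm_iteratedFDeriv_forceMap_comp_fderiv_le hBk z, hA (k + 1) (by lia) z,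
      norm_nonneg (iteratedFDeriv ℝ (k + 1) B z)]
  norm_force_two_le z := by
    have hB₃ : ContDiff ℝ ((2 : ℕ) + 1) B := by exact_mod_cast hB
    linarith [norm_iteratedFDeriv_forceMap_comp_fderiv_le hB₃ z, hM z,
      norm_nonneg (iteratedFDeriv ℝ 3 B z)]

end QuadraticHamiltonian

section Rescaling

set_option maxSynthPendingDepth 5

variable {E : Type*} [NormedAddCommGroup E] [NormedSpace ℝ E]

/-- The conjugate of a flow by the dilation of momenta by `μ`, with time slowed down by `μ`.
It brings momenta of size `μ` and times of size `μ⁻¹` to unit size. -/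
def rescaledFlow (μ : ℝ) (χ : ℝ → E × E → E × E) (s : ℝ) (w : E × E) : E × E :=
  ((χ (μ⁻¹ * s) (w.1, μ • w.2)).1, μ⁻¹ • (χ (μ⁻¹ * s) (w.1, μ • w.2)).2)

variable {μ : ℝ} {χ : ℝ → E × E → E × E}

theorem isFlow_rescaledFlow {N : E → E →L[ℝ] E} {P : E → E →L[ℝ] E →L[ℝ] E}
    (hχ : IsFlow (homogeneousField N P) χ) (hμ : μ ≠ 0) :
    IsFlow (homogeneousField N P) (rescaledFlow μ χ) := by
  refine ⟨fun w => by simp [rescaledFlow, hχ.1, hμ], fun w s => ?_⟩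
  have slowed := (hχ.2 (w.1, μ • w.2) (μ⁻¹ * s)).scomp s ((hasDerivAt_id s).const_mul μ⁻¹)
  have hfst : HasDerivAt (fun s => (rescaledFlow μ χ s w).1) _ s := slowed.fst
  have hsnd : HasDerivAt (fun s => (χ (μ⁻¹ * s) (w.1, μ • w.2)).2) _ s := slowed.snd
  refine (hfst.prodMk (hsnd.const_smul μ⁻¹)).congr_deriv ?_
  simp [homogeneousField, rescaledFlow]

theorem fst_rescaledFlow_mul (hμ : μ ≠ 0) (t : ℝ) (z ζ : E) :
    (rescaledFlow μ χ (μ * t) (z, μ⁻¹ • ζ)).1 = (χ t (z, ζ)).1 := by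
  simp [rescaledFlow, hμ]

theorem fderiv_snd_rescaledFlow_mul (hμ : μ ≠ 0) (t : ℝ) (z ζ : E) :
    fderiv ℝ (fun ζ' => (rescaledFlow μ χ (μ * t) (z, ζ')).2) (μ⁻¹ • ζ) =
      fderiv ℝ (fun ζ' => (χ t (z, ζ')).2) ζ := by
  simp only [rescaledFlow, inv_mul_cancel_left₀ hμ]
  change fderiv ℝ (μ⁻¹ • fun ζ' => (χ t (z, μ • ζ')).2) (μ⁻¹ • ζ) = _
  rw [fderiv_const_smul_field, Pi.smul_apply, fderiv_comp_smul (f := fun ζ' => (χ t (z, ζ')).2),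
    smul_inv_smul₀ hμ, inv_smul_smul₀ hμ]

/- In the next three lemmas `m ^ 2` is the frequency, `τ ^ 2` the time, and `d` the distance of the
initial positions, while `Q` and `U` bound the distance of the rescaled trajectories and that of
their positions. -/
theorem rescaled_distance_le {m τ d : ℝ} (hm : 0 < m) (hτ : 0 < τ) (hmτ : m * τ ≤ 1)
    (hd : 0 ≤ d) :
    m ^ 2 * τ ^ 2 * (2 * (d + (m ^ 2)⁻¹ * τ⁻¹)) ≤ 2 * τ * (1 + m * d) :=
  calc m ^ 2 * τ ^ 2 * (2 * (d + (m ^ 2)⁻¹ * τ⁻¹))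
      = 2 * τ * (1 + (m * τ) * (m * d)) := by field_simp; ring
    _ ≤ 2 * τ * (1 + 1 * (m * d)) := by gcongr
    _ = 2 * τ * (1 + m * d) := by ring

theorem rescaled_position_distance_le {K m τ d Q : ℝ} (hK : 1 ≤ K) (hm : 0 ≤ m)
    (hmτ : m * τ ≤ 1) (hd : 0 ≤ d) (hQ : m ^ 2 * τ ^ 2 * Q ≤ 2 * τ * (1 + m * d)) :
    m * (d + K * Q * (m ^ 2 * τ ^ 2)) ≤ 3 * K * (1 + m * d) := by
  have hmd : m * d ≤ K * (1 + m * d) := by nlinarith [mul_nonneg hm hd]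
  calc m * (d + K * Q * (m ^ 2 * τ ^ 2)) = m * d + K * m * (m ^ 2 * τ ^ 2 * Q) := by ring
    _ ≤ m * d + K * m * (2 * τ * (1 + m * d)) := by gcongr
    _ = m * d + (m * τ) * (2 * K * (1 + m * d)) := by ring
    _ ≤ K * (1 + m * d) + 1 * (2 * K * (1 + m * d)) := add_le_add hmd (by gcongr)
    _ = 3 * K * (1 + m * d) := by ring

theorem rescaled_error_le {K m τ d Q U : ℝ} (hK : 1 ≤ K) (hm : 1 ≤ m) (hτ : 0 ≤ τ)
    (hmτ : m * τ ≤ 1) (hd : 0 ≤ d) (hQ₀ : 0 ≤ Q) (hU₀ : 0 ≤ U)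
    (hQ : m ^ 2 * τ ^ 2 * Q ≤ 2 * τ * (1 + m * d)) (hU : m * U ≤ 3 * K * (1 + m * d)) :
    2 * K * (m ^ 2 * τ ^ 2) * Q + m ^ 2 * τ ^ 2 * (2 * (K * (U ^ 2 + U * Q)) +
        2 * K * (m ^ 2 * τ ^ 2) * (K * (m * U ^ 2 + U * Q + Q ^ 2))) ≤
      144 * K ^ 4 * τ * (1 + m ^ 2 * d ^ 2) := by
  set g := 1 + m * d with hg
  set T := m ^ 2 * τ ^ 2 with hT
  have hg₁ : 1 ≤ g := by rw [hg]; linarith [mul_nonneg (zero_le_one.trans hm) hd]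
  have hT₀ : 0 ≤ T := by positivity
  have hT₁ : T ≤ 1 := by rw [hT, ← mul_pow]; exact pow_le_one₀ (by positivity) hmτ
  have hτ₁ : τ ≤ 1 := by nlinarith
  have hTQ : T * Q ≤ 2 * τ * g ^ 2 := hQ.trans (by gcongr; exact le_self_pow₀ hg₁ two_ne_zero)
  have hTmUU : T * (m * U ^ 2) ≤ 9 * K ^ 2 * τ * g ^ 2 :=
    calc T * (m * U ^ 2) = (m * τ) * τ * (m * U) ^ 2 := by rw [hT]; ring
      _ ≤ 1 * τ * (3 * K * g) ^ 2 := by gcongr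
      _ = 9 * K ^ 2 * τ * g ^ 2 := by ring
  have hTUU : T * U ^ 2 ≤ 9 * K ^ 2 * τ * g ^ 2 :=
    hTmUU.trans' (by gcongr; exact le_mul_of_one_le_left (by positivity) hm)
  have hTUQ : T * (U * Q) ≤ 6 * K * τ * g ^ 2 :=
    calc T * (U * Q) ≤ (m * U) * (T * Q) := by
          nlinarith [mul_nonneg (mul_nonneg hT₀ hU₀) hQ₀]
      _ ≤ (3 * K * g) * (2 * τ * g) := by gcongr
      _ = 6 * K * τ * g ^ 2 := by ring
  have hTTQQ : T * (T * Q ^ 2) ≤ 4 * τ * g ^ 2 :=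
    calc T * (T * Q ^ 2) = (T * Q) ^ 2 := by ring
      _ ≤ (2 * τ * g) ^ 2 := by gcongr
      _ = 4 * τ * g ^ 2 * τ := by ring
      _ ≤ 4 * τ * g ^ 2 := mul_le_of_le_one_right (by positivity) hτ₁
  calc 2 * K * T * Q + T * (2 * (K * (U ^ 2 + U * Q)) +
        2 * K * T * (K * (m * U ^ 2 + U * Q + Q ^ 2)))
      = 2 * K * (T * Q) + 2 * K * (T * U ^ 2 + T * (U * Q)) +
          2 * K ^ 2 * (T * (T * (m * U ^ 2)) + T * (T * (U * Q)) + T * (T * Q ^ 2)) := by ring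
    _ ≤ 2 * K * (2 * τ * g ^ 2) + 2 * K * (9 * K ^ 2 * τ * g ^ 2 + 6 * K * τ * g ^ 2) +
          2 * K ^ 2 * (1 * (9 * K ^ 2 * τ * g ^ 2) + 1 * (6 * K * τ * g ^ 2) +
            4 * τ * g ^ 2) := by gcongr
    _ = (4 * K ^ 1 + 20 * K ^ 2 + 30 * K ^ 3 + 18 * K ^ 4) * (τ * g ^ 2) := by ring
    _ ≤ (4 * K ^ 4 + 20 * K ^ 4 + 30 * K ^ 4 + 18 * K ^ 4) * (τ * (2 * (1 + m ^ 2 * d ^ 2))) := by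
        gcongr <;> first | lia | nlinarith [sq_nonneg (1 - m * d)]
    _ = 144 * K ^ 4 * τ * (1 + m ^ 2 * d ^ 2) := by ring

end Rescaling

section Frequency

variable {E : Type*} [NormedAddCommGroup E] [InnerProductSpace ℝ E] [CompleteSpace E]

theorem norm_sub_adjoint_fderiv_snd_flow_le_of_frequency_le {N : E → E →L[ℝ] E}
    {P : E → E →L[ℝ] E →L[ℝ] E} {χ : ℝ → E × E → E × E} {r K μ t : ℝ} (hμ : 1 ≤ μ) (hK : 1 ≤ K)
    (hF : IsBoundedSymplecticField (homogeneousField N P) (r + 2) K √μ)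
    (hχ : IsFlow (homogeneousField N P) χ) (ht : 0 < t) (hKt : K * (μ * t) ≤ 1 / 2)
    {x z ξ ζ : E} (hξ : ‖ξ‖ ≤ r * μ) (hζ : ‖ζ‖ ≤ r * μ) (hξζ : ‖ξ - ζ‖ ≤ (√t)⁻¹) :
    ‖(x - z) - ContinuousLinearMap.adjoint (fderiv ℝ (fun ζ' => (χ t (z, ζ')).2) ζ)
        ((χ t (x, ξ)).1 - (χ t (z, ζ)).1)‖ ≤
      144 * K ^ 4 * √t * (1 + μ * ‖x - z‖ ^ 2) := by
  obtain ⟨m, hm₀, rfl⟩ : ∃ m, 0 < m ∧ μ = m ^ 2 :=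
    ⟨√μ, Real.sqrt_pos.2 (by linarith), (Real.sq_sqrt (by linarith)).symm⟩
  obtain ⟨τ, hτ₀, rfl⟩ : ∃ τ, 0 < τ ∧ t = τ ^ 2 :=
    ⟨√t, Real.sqrt_pos.2 ht, (Real.sq_sqrt ht.le).symm⟩
  rw [Real.sqrt_sq hm₀.le] at hF
  rw [Real.sqrt_sq hτ₀.le] at hξζ ⊢
  have hm : 1 ≤ m := (one_le_sq_iff₀ hm₀.le).1 hμ
  have hmτ : m * τ ≤ 1 := by
    refine (sq_le_one_iff₀ (by positivity)).1 ?_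
    nlinarith [mul_pow m τ 2, sq_nonneg (m * τ)]
  have norm_rescaled_lt : ∀ η : E, ‖η‖ ≤ r * m ^ 2 → ‖(m ^ 2)⁻¹ • η‖ + 1 < r + 2 :=
    fun η hη => by
      have := (inv_mul_le_iff₀ (by positivity)).2 (hη.trans_eq (mul_comm r _))
      rw [norm_smul, Real.norm_of_nonneg (by positivity)]
      linarith
  set d := ‖x - z‖
  have hd : 0 ≤ d := norm_nonneg _
  have distance_le : 2 * ‖(x, (m ^ 2)⁻¹ • ξ) - (z, (m ^ 2)⁻¹ • ζ)‖ ≤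
      2 * (d + (m ^ 2)⁻¹ * τ⁻¹) := by
    refine mul_le_mul_of_nonneg_left (norm_prod_le_iff.2 ⟨?_, ?_⟩) zero_le_two
    · exact le_add_of_nonneg_right (by positivity)
    · rw [Prod.snd_sub, ← smul_sub, norm_smul, Real.norm_of_nonneg (by positivity)]
      exact (mul_le_mul_of_nonneg_left hξζ (by positivity)).trans (le_add_of_nonneg_left hd)
  have hm_sq : m ^ 2 ≠ 0 := pow_ne_zero 2 hm₀.ne'
  have hQ := rescaled_distance_le hm₀ hτ₀ hmτ hd
  rw [← fderiv_snd_rescaledFlow_mul hm_sq, ← fst_rescaledFlow_mul (χ := χ) hm_sq _ x,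
    ← fst_rescaledFlow_mul (χ := χ) hm_sq _ z]
  exact (hF.norm_sub_adjoint_fderiv_snd_flow_le (isFlow_rescaledFlow hχ hm_sq)
    (by positivity) hKt (norm_rescaled_lt ξ hξ) (norm_rescaled_lt ζ hζ) distance_le le_rfl).trans
    (rescaled_error_le hK hm hτ₀.le hmτ hd (by positivity) (by positivity) hQ
      (rescaled_position_distance_le hK hm₀.le hmτ hd hQ))

theorem norm_sub_adjoint_fderiv_snd_quadraticFlow_le {B : E → E →L[ℝ] E →L[ℝ] ℝ}
    {χ : ℝ → E × E → E × E} {A r μ t : ℝ} (hA : 1 ≤ A) (hr : 0 ≤ r) (hμ : 1 ≤ μ)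
    (hB : ContDiff ℝ 3 B) (hB_le : ∀ k ≤ 2, ∀ z, ‖iteratedFDeriv ℝ k B z‖ ≤ A)
    (hB_three_le : ∀ z, ‖iteratedFDeriv ℝ 3 B z‖ ≤ A * √μ) (hχ : IsFlow (quadraticField B) χ)
    (ht : 0 < t) (hAt : 2 * A * (r + 3) ^ 2 * (μ * t) ≤ 1 / 2)
    {x z ξ ζ : E} (hξ : ‖ξ‖ ≤ r * μ) (hζ : ‖ζ‖ ≤ r * μ) (hξζ : ‖ξ - ζ‖ ≤ (√t)⁻¹) :
    ‖(x - z) - ContinuousLinearMap.adjoint (fderiv ℝ (fun ζ' => (χ t (z, ζ')).2) ζ)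
        ((χ t (x, ξ)).1 - (χ t (z, ζ)).1)‖ ≤
      144 * (2 * A * (r + 3) ^ 2) ^ 4 * √t * (1 + μ * ‖x - z‖ ^ 2) := by
  have hF : IsBoundedSymplecticField (quadraticField B) (r + 2) (2 * A * (r + 2 + 1) ^ 2) √μ :=
    (isBoundedCoefficients_of_norm_iteratedFDeriv_le hB hB_le hB_three_le).isBoundedSymplecticField
      (by positivity) (Real.sqrt_nonneg μ) (by positivity)
      (isInfinitesimallySymplectic_fderiv_quadraticField (hB.of_le (by norm_num)))
  rw [show r + 2 + 1 = r + 3 by ring] at hF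
  exact norm_sub_adjoint_fderiv_snd_flow_le_of_frequency_le hμ (by nlinarith) hF hχ ht hAt hξ hζ
    hξζ

end Frequency

section Coordinates

set_option maxSynthPendingDepth 5

variable {n : ℕ}

theorem norm_euclideanProj_le_one (i : Fin n) :
    ‖(EuclideanSpace.proj i : En n →L[ℝ] ℝ)‖ ≤ 1 :=
  ContinuousLinearMap.opNorm_le_bound _ zero_le_one fun v => by
    simpa using PiLp.norm_apply_le v i

/-- The bilinear form `η, η' ↦ ηᵢ η'ⱼ`. -/
def coordinateForm (i j : Fin n) : En n →L[ℝ] En n →L[ℝ] ℝ :=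
  (EuclideanSpace.proj i).smulRight (EuclideanSpace.proj j : En n →L[ℝ] ℝ)

/-- The bilinear form with matrix `a · · z`, whose quadratic form is `ham a (z, ·)`. -/
def coefficientForm (a : Fin n → Fin n → En n → ℝ) (z : En n) : En n →L[ℝ] En n →L[ℝ] ℝ :=
  ∑ p : Fin n × Fin n, a p.1 p.2 z • coordinateForm p.1 p.2

theorem norm_coordinateForm_le_one (i j : Fin n) : ‖coordinateForm i j‖ ≤ 1 := by
  rw [coordinateForm, ContinuousLinearMap.norm_smulRight_apply]
  exact mul_le_one₀ (norm_euclideanProj_le_one i) (norm_nonneg _) (norm_euclideanProj_le_one j)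

variable {a : Fin n → Fin n → En n → ℝ}

theorem contDiff_coefficientForm {k : WithTop ℕ∞} (ha : ∀ i j, ContDiff ℝ k (a i j)) :
    ContDiff ℝ k (coefficientForm a) :=
  ContDiff.sum fun p _ => (ha p.1 p.2).smul contDiff_const

theorem coefficientForm_apply_self (z η : En n) : coefficientForm a z η η = ham a (z, η) := by
  simp [coefficientForm, coordinateForm, ham, Fintype.sum_prod_type, mul_assoc]

theorem hamField_eq_quadraticField (ha : ∀ i j, Differentiable ℝ (a i j)) :
    hamField a = quadraticField (coefficientForm a) := by
  have hB : Differentiable ℝ (coefficientForm a) :=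
    Differentiable.fun_sum fun p _ => (ha p.1 p.2).smul_const _
  funext w
  rw [quadraticField_apply (hB w.1)]
  simp only [coefficientForm_apply_self, hamField]

theorem norm_iteratedFDeriv_coefficientForm_le {k : ℕ} {D : ℝ} {z : En n}
    (ha : ∀ i j, ContDiff ℝ k (a i j)) (hD : ∀ i j, ‖iteratedFDeriv ℝ k (a i j) z‖ ≤ D) :
    ‖iteratedFDeriv ℝ k (coefficientForm a) z‖ ≤ n ^ 2 * D := by
  have norm_term_le : ∀ p : Fin n × Fin n,
      ‖iteratedFDeriv ℝ k (fun z => a p.1 p.2 z • coordinateForm p.1 p.2) z‖ ≤ D := fun p => by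
    let scale := ContinuousLinearMap.toSpanSingleton ℝ (coordinateForm p.1 p.2)
    have norm_scale_le : ‖scale‖ ≤ 1 := by
      rw [ContinuousLinearMap.norm_toSpanSingleton]
      exact norm_coordinateForm_le_one _ _
    have norm_comp_le := scale.norm_iteratedFDeriv_comp_left
      ((ha p.1 p.2).contDiffAt (x := z)) le_rfl
    exact (norm_comp_le.trans (mul_le_of_le_one_left (norm_nonneg _) norm_scale_le)).trans
      (hD p.1 p.2)
  unfold coefficientForm
  rw [iteratedFDeriv_fun_sum_apply fun p _ =>
    ((ha p.1 p.2).smul contDiff_const).contDiffAt]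
  refine (norm_sum_le_of_le _ fun p _ => norm_term_le p).trans_eq ?_
  simp [sq]

end Coordinates

theorem statement15_general {n : ℕ} (A r : ℝ) :
    ∃ ε : ℝ, 0 < ε ∧ ∃ C : ℝ,
      ∀ (μ : ℝ), 1 ≤ μ →
      ∀ (a : Fin n → Fin n → En n → ℝ), (∀ i j, ContDiff ℝ 3 (a i j)) →
        (∀ i j x, ∀ k ≤ 2, ‖iteratedFDeriv ℝ k (a i j) x‖ ≤ A) →
        (∀ i j x, ‖iteratedFDeriv ℝ 3 (a i j) x‖ ≤ A * √μ) →
      ∀ (χ : ℝ → En n × En n → En n × En n), IsHamFlow a χ →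
      ∀ (t : ℝ), 0 < t → t ≤ ε * μ⁻¹ →
      ∀ (x z ξ ζ : En n), ‖ξ‖ ≤ r * μ → ‖ζ‖ ≤ r * μ → ‖ξ - ζ‖ ≤ t ^ (-(1 : ℝ) / 2) →
        t ^ (-(1 : ℝ) / 2) *
            ‖(x - z) -
              ContinuousLinearMap.adjoint (fderiv ℝ (fun ζ' => (χ t (z, ζ')).2) ζ)
                ((χ t (x, ξ)).1 - (χ t (z, ζ)).1)‖
          ≤ C * (1 + μ * ‖x - z‖ ^ 2) := by
  set A' := n ^ 2 * |A| + 1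
  set K := 2 * A' * (|r| + 3) ^ 2
  have hK : 0 < K := by positivity
  refine ⟨(2 * K)⁻¹, by positivity, 144 * K ^ 4, ?_⟩
  intro μ hμ a ha ha_le ha_three_le χ hχ t ht hεt x z ξ ζ hξ hζ hξζ
  have hA : A ≤ |A| := le_abs_self A
  have hr : r * μ ≤ |r| * μ := by gcongr; exact le_abs_self r
  have rpow_t : t ^ (-(1 : ℝ) / 2) = (√t)⁻¹ := by
    rw [neg_div, Real.rpow_neg ht.le, Real.sqrt_eq_rpow]
  have hKt : K * (μ * t) ≤ 1 / 2 := by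
    calc K * (μ * t) ≤ K * (μ * ((2 * K)⁻¹ * μ⁻¹)) := by gcongr
      _ = 1 / 2 := by field_simp
  have hB_le : ∀ k ≤ 2, ∀ z, ‖iteratedFDeriv ℝ k (coefficientForm a) z‖ ≤ A' := fun k hk z =>
    (norm_iteratedFDeriv_coefficientForm_le
      (fun i j => (ha i j).of_le (mod_cast hk.trans (by norm_num)))
      (fun i j => (ha_le i j z k hk).trans hA)).trans (le_add_of_nonneg_right zero_le_one)
  have hB_three_le : ∀ z, ‖iteratedFDeriv ℝ 3 (coefficientForm a) z‖ ≤ A' * √μ := fun z => by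
    have hB₃ := norm_iteratedFDeriv_coefficientForm_le ha
      (fun i j => (ha_three_le i j z).trans (mul_le_mul_of_nonneg_right hA (Real.sqrt_nonneg μ)))
    exact hB₃.trans (by rw [← mul_assoc]; gcongr; exact le_add_of_nonneg_right zero_le_one)
  have hχ' : IsFlow (quadraticField (coefficientForm a)) χ := by
    rwa [← hamField_eq_quadraticField fun i j => (ha i j).differentiable (by norm_num)]
  rw [rpow_t] at hξζ ⊢
  rw [inv_mul_le_iff₀ (Real.sqrt_pos.2 ht)]
  refine (norm_sub_adjoint_fderiv_snd_quadraticFlow_le (le_add_of_nonneg_left (by positivity))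
    (abs_nonneg r) hμ (contDiff_coefficientForm ha) hB_le hB_three_le hχ' ht hKt (hξ.trans hr)
    (hζ.trans hr) hξζ).trans_eq ?_
  ring

theorem HamSetup.norm_iteratedFDeriv_le_two {n k : ℕ} {μ : ℝ} {Cα : ℕ → ℝ}
    {a : Fin n → Fin n → En n → ℝ} (h : HamSetup μ Cα a) (hk : k ≤ 2) (i j : Fin n) (x : En n) :
    ‖iteratedFDeriv ℝ k (a i j) x‖ ≤ 2 := by
  have h_sum := h.2.2.1 i j x
  have := abs_nonneg (a i j x - if i = j then (1 : ℝ) else 0)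
  have := norm_nonneg (fderiv ℝ (a i j) x)
  have := norm_nonneg (iteratedFDeriv ℝ 2 (a i j) x)
  interval_cases k
  · have hδ : |if i = j then (1 : ℝ) else 0| ≤ 1 := by split_ifs <;> simp
    rw [norm_iteratedFDeriv_zero, Real.norm_eq_abs]
    linarith [abs_sub_abs_le_abs_sub (a i j x) (if i = j then (1 : ℝ) else 0)]
  · rw [norm_iteratedFDeriv_one]
    linarith
  · linarith

theorem HamSetup.norm_iteratedFDeriv_three_le {n : ℕ} {μ : ℝ} {Cα : ℕ → ℝ}
    {a : Fin n → Fin n → En n → ℝ} (h : HamSetup μ Cα a) (i j : Fin n) (x : En n) :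
    ‖iteratedFDeriv ℝ 3 (a i j) x‖ ≤ Cα 3 * √μ := by
  have exponent : max 0 (((3 : ℕ) : ℝ) - 2) / 2 = 1 / 2 := by norm_num
  simpa only [exponent, ← Real.sqrt_eq_rpow] using h.2.2.2 i j 3 x

/-- For `μ⁻² ≤ t ≤ ε μ⁻¹`, `ξ, ζ` in the annulus with
`|ξ − ζ| ≤ t^{-1/2}`,
`t^{-1/2} |(x − z) − (d_ζ ζ_t)(z,ζ) · (z_t(x,ξ) − z_t(z,ζ))| ≤ C (1 + μ|x−z|²)`,
where `(d_ζ ζ_t · w)ᵢ = Σ_k ∂_{ζᵢ}(ζ_t)_k w_k`, i.e. the adjoint of the Jacobian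
`d_ζ ζ_t` acts on `w`. -/
theorem statement15 {n : ℕ} (hn : 2 ≤ n) (Cα : ℕ → ℝ) :
    ∃ ε : ℝ, 0 < ε ∧ ∃ C : ℝ,
      ∀ (μ : ℝ), 1 ≤ μ →
      ∀ (a : Fin n → Fin n → En n → ℝ), HamSetup μ Cα a →
      ∀ (χ : ℝ → En n × En n → En n × En n), IsHamFlow a χ →
      ∀ (t : ℝ), μ⁻¹ ^ 2 ≤ t → t ≤ ε * μ⁻¹ →
      ∀ (x z ξ ζ : En n), μ / 4 ≤ ‖ξ‖ → ‖ξ‖ ≤ 4 * μ → μ / 4 ≤ ‖ζ‖ → ‖ζ‖ ≤ 4 * μ →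
        ‖ξ - ζ‖ ≤ t ^ (-(1 : ℝ) / 2) →
        t ^ (-(1 : ℝ) / 2) *
            ‖(x - z) -
              ContinuousLinearMap.adjoint (fderiv ℝ (fun ζ' => (χ t (z, ζ')).2) ζ)
                ((χ t (x, ξ)).1 - (χ t (z, ζ)).1)‖
          ≤ C * (1 + μ * ‖x - z‖ ^ 2) := by
  obtain ⟨ε, hε, C, h_general⟩ := statement15_general (n := n) (max 2 (Cα 3)) 4
  refine ⟨ε, hε, C, fun μ hμ a ha χ hχ t hμt hεt x z ξ ζ _ hξ _ hζ hξζ => ?_⟩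
  have ha_three_le : ∀ i j x, ‖iteratedFDeriv ℝ 3 (a i j) x‖ ≤ max 2 (Cα 3) * √μ := fun i j x =>
    (ha.norm_iteratedFDeriv_three_le i j x).trans (by gcongr; exact le_max_right ..)
  exact h_general μ hμ a (fun i j => mod_cast contDiff_infty.1 (ha.1 i j) 3)
    (fun i j x k hk => (ha.norm_iteratedFDeriv_le_two hk i j x).trans (le_max_left ..))
    ha_three_le χ hχ t ((by positivity : 0 < μ⁻¹ ^ 2).trans_le hμt) hεt x z ξ ζ hξ hζ hξζ
end
end
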